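/- arXiv:2503.11506 — 2 statements merged into one kernel-verified Lean document; each statement's English description precedes it below -/
import Mathlib

section
/- Let n ≥ 1 and m ≥ n+1 be integers and γ ∈ (0,1]. If f : ℝ^m → ℝ^{2n+1} is a topological embedding which is locally γ-Hölder continuous as a map into the Heisenberg group ℍ^n — that is, for every compact set K ⊆ ℝ^m there is a constant C_K with d_K(f(x), f(y)) ≤ C_K·|x−y|^γ for all x, y ∈ K — then γ ≤ (n+1)/(n+2). -/
open Metric Set MeasureTheory Topology

/-- The index of the coordinate `x_j` in `ℝ^{2n+1}`. -/
def xI (n : ℕ) (j : Fin n) : Fin (2*n+1) := ⟨2*j.1, by have := j.2; omega⟩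

/-- The index of the coordinate `y_j` in `ℝ^{2n+1}`. -/
def yI (n : ℕ) (j : Fin n) : Fin (2*n+1) := ⟨2*j.1+1, by have := j.2; omega⟩

/-- The index of the coordinate `t` in `ℝ^{2n+1}`. -/
def tI (n : ℕ) : Fin (2*n+1) := Fin.last (2*n)

/-- The Korányi metric on the Heisenberg group `ℍ^n = ℝ^{2n+1}`:
`d_K(p,q) = (|z-z'|^4 + |t - t' + 2 ∑_j (x_j' y_j - x_j y_j')|^2)^{1/4}`. -/
noncomputable def dK (n : ℕ) (p q : EuclideanSpace ℝ (Fin (2*n+1))) : ℝ :=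
  ((∑ i : Fin (2*n), (p (Fin.castSucc i) - q (Fin.castSucc i)) ^ 2) ^ 2 +
    (p (tI n) - q (tI n) +
      2 * ∑ j : Fin n, (q (xI n j) * p (yI n j) - p (xI n j) * q (yI n j))) ^ 2) ^ ((1:ℝ)/4)

section Lefschetz

variable {α ι M : Type*} [AddCommGroup M]

/-- A function on words which changes sign under transpositions of adjacent letters. -/
def AltOnLists (A : List α → M) : Prop :=
  ∀ l₁ x y l₂, A (l₁ ++ x :: y :: l₂) = - A (l₁ ++ y :: x :: l₂)

namespace AltOnLists

variable {A : List α → M}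

theorem cons (hA : AltOnLists A) (x : α) : AltOnLists fun l => A (x :: l) :=
  fun l₁ y z l₂ => hA (x :: l₁) y z l₂

theorem swap (hA : AltOnLists A) (x y : α) (l : List α) : A (x :: y :: l) = - A (y :: x :: l) :=
  hA [] x y l

theorem eq_zero_of_perm {l l' : List α} (h : l.Perm l') :
    ∀ {A : List α → M}, AltOnLists A → A l = 0 → A l' = 0 := by
  induction h with
  | nil => exact fun _ h => h
  | cons x _ ih => exact fun hA h => ih (hA.cons x) h
  | swap x y l => exact fun hA h => by rw [hA.swap, h, neg_zero]
  | trans _ _ ih₁ ih₂ => exact fun hA h => ih₂ hA (ih₁ hA h)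

theorem rotate (hA : AltOnLists A) (x y z : α) (l : List α) :
    A (x :: y :: z :: l) = A (z :: x :: y :: l) := by
  rw [(hA.cons x).swap y z l, hA.swap x z, neg_neg]

end AltOnLists

variable [Module ℝ M]

/-- Contraction of a function on words with the bivector `∑ j ∈ s, e j ∧ f j`. -/
def listTrace (e f : ι → α) (s : Finset ι) : Module.End ℝ (List α → M) where
  toFun A l := ∑ j ∈ s, A (e j :: f j :: l)
  map_add' A B := by ext l; simp [Finset.sum_add_distrib]
  map_smul' c A := by ext l; simp [Finset.smul_sum]

theorem listTrace_apply (e f : ι → α) (s : Finset ι) (A : List α → M) (l : List α) :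
    listTrace e f s A l = ∑ j ∈ s, A (e j :: f j :: l) := rfl

namespace AltOnLists

variable {A : List α → M} {e f : ι → α} {s : Finset ι}

theorem trace (hA : AltOnLists A) : AltOnLists (listTrace e f s A) := by
  intro l₁ x y l₂
  simp only [listTrace_apply, ← Finset.sum_neg_distrib]
  exact Finset.sum_congr rfl fun j _ => hA (e j :: f j :: l₁) x y l₂

theorem eq_zero_of_cons_cons_self (hA : AltOnLists A) (x : α) (l : List α) :
    A (x :: x :: l) = 0 := by
  have h : (2 : ℝ) • A (x :: x :: l) = 0 := by
    rw [two_smul]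
    nth_rewrite 1 [hA.swap]
    exact neg_add_cancel _
  exact (smul_eq_zero.mp h).resolve_left two_ne_zero

theorem trace_cons (hA : AltOnLists A) (x : α) :
    (fun l => listTrace e f s A (x :: l)) = listTrace e f s fun l => A (x :: l) := by
  ext l
  exact Finset.sum_congr rfl fun j _ => hA.rotate _ _ _ _

theorem trace_pow_cons (r : ℕ) (x : α) {A : List α → M} (hA : AltOnLists A) :
    (fun l => (listTrace e f s ^ r) A (x :: l)) = (listTrace e f s ^ r) fun l => A (x :: l) := by
  induction r generalizing A with
  | zero => rfl
  | succ r ih =>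
    simp only [pow_succ, Module.End.mul_apply]
    rw [ih hA.trace, hA.trace_cons]

theorem trace_insert_pow [DecidableEq ι] {i : ι} (hi : i ∉ s) (r : ℕ) {A : List α → M}
    (hA : AltOnLists A) :
    (listTrace e f (insert i s) ^ (r + 1)) A = (listTrace e f s ^ (r + 1)) A +
      ((r : ℝ) + 1) • (listTrace e f s ^ r) (fun l => A (e i :: f i :: l)) := by
  have key : ∀ B : List α → M, listTrace e f (insert i s) B =
      listTrace e f s B + fun l => B (e i :: f i :: l) := by
    intro B
    ext l
    simp [listTrace_apply, Finset.sum_insert hi, add_comm]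
  induction r generalizing A with
  | zero => simp [key]
  | succ r ih =>
    rw [pow_succ, Module.End.mul_apply, ih hA.trace, key]
    have h₁ : (fun l => (listTrace e f s A + fun l => A (e i :: f i :: l)) (e i :: f i :: l)) =
        listTrace e f s fun l => A (e i :: f i :: l) := by
      have h₂ : (fun l => listTrace e f s A (e i :: f i :: l)) =
          listTrace e f s fun l => A (e i :: f i :: l) := by
        rw [← (hA.cons (e i)).trace_cons (f i), ← hA.trace_cons (e i)]
      ext l
      rw [← congrFun h₂ l, Pi.add_apply, (hA.cons (e i)).swap, hA.eq_zero_of_cons_cons_self,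
        neg_zero, add_zero]
    rw [h₁, map_add, pow_succ _ (r + 1), Module.End.mul_apply, pow_succ _ r,
      Module.End.mul_apply, Module.End.mul_apply]
    push_cast
    module

/-- An alternating function on the words in the letters `e j, f j`, `j ∈ s`, whose `r`-fold
contraction with `∑ j, e j ∧ f j` vanishes, vanishes in degrees at least `card s + r`. -/
theorem eq_zero_of_trace_pow_eq_zero [DecidableEq ι] [DecidableEq α] (s : Finset ι) :
    ∀ (r : ℕ) {A : List α → M}, AltOnLists A →
    (∀ l, (∀ a ∈ l, ∃ j ∈ s, a = e j ∨ a = f j) → s.card ≤ l.length + r →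
      (listTrace e f s ^ r) A l = 0) →
    ∀ l, (∀ a ∈ l, ∃ j ∈ s, a = e j ∨ a = f j) → s.card + r ≤ l.length → A l = 0 := by
  induction s using Finset.induction_on with
  | empty =>
    intro r A _ h l hl hlen
    cases l with
    | nil =>
      have : r = 0 := by simpa using hlen
      subst this
      simpa using h [] (by simp) (by simp)
    | cons a l => exact absurd (hl a (by simp)) (by simp)
  | insert i s hi ih =>
    intro r A hA h l hl hlen
    rw [Finset.card_insert_of_notMem hi] at h hlen
    cases r with
    | zero => simpa using h l hl (by omega)
    | succ r =>
      have mono : ∀ l : List α, (∀ a ∈ l, ∃ j ∈ s, a = e j ∨ a = f j) →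
          ∀ a ∈ l, ∃ j ∈ insert i s, a = e j ∨ a = f j := fun l hl a ha => by
        obtain ⟨j, hj, hja⟩ := hl a ha
        exact ⟨j, Finset.mem_insert_of_mem hj, hja⟩
      have h_single : ∀ x, x = e i ∨ x = f i → ∀ l, (∀ a ∈ l, ∃ j ∈ s, a = e j ∨ a = f j) →
          s.card + (r + 1) ≤ l.length → A (x :: l) = 0 := by
        intro x hx
        refine ih (r + 1) (hA.cons x) fun l hl hlen => ?_
        have := h (x :: l) (by
          intro a ha
          rcases List.mem_cons.mp ha with rfl | ha
          · exact ⟨i, Finset.mem_insert_self _ _, hx⟩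
          · exact mono l hl a ha) (by simp; omega)
        rw [trace_insert_pow hi r hA, Pi.add_apply, Pi.smul_apply] at this
        rw [← trace_pow_cons (r + 1) x hA]
        have h0 : (listTrace e f s ^ r) (fun l => A (e i :: f i :: l)) (x :: l) = 0 := by
          rw [congrFun (trace_pow_cons r x ((hA.cons (e i)).cons (f i))) l]
          have : (fun l => A (e i :: f i :: x :: l)) = (0 : List α → M) := by
            ext l
            rcases hx with rfl | rfl
            · rw [(hA.cons (e i)).swap, hA.eq_zero_of_cons_cons_self, neg_zero]; rfl
            · exact (hA.cons (e i)).eq_zero_of_cons_cons_self _ _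
          rw [this, map_zero]; rfl
        rwa [h0, smul_zero, add_zero] at this
      have h_pair : ∀ l, (∀ a ∈ l, ∃ j ∈ s, a = e j ∨ a = f j) → s.card ≤ l.length + (r + 1 + 1) →
          (listTrace e f s ^ (r + 1)) (fun l => A (e i :: f i :: l)) l = 0 := by
        intro l hl hlen
        have := h (e i :: f i :: l) (by
          intro a ha
          rcases List.mem_cons.mp ha with rfl | ha
          · exact ⟨i, Finset.mem_insert_self _ _, .inl rfl⟩
          rcases List.mem_cons.mp ha with rfl | ha
          · exact ⟨i, Finset.mem_insert_self _ _, .inr rfl⟩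
          · exact mono l hl a ha) (by simp; omega)
        rw [trace_insert_pow hi r hA, Pi.add_apply, Pi.smul_apply] at this
        rw [← trace_pow_cons (r + 1) (f i) (hA.cons (e i)), ← trace_pow_cons (r + 1) (e i) hA]
        have h0 : (listTrace e f s ^ r) (fun l => A (e i :: f i :: l)) (e i :: f i :: l) = 0 := by
          rw [congrFun (trace_pow_cons r (e i) ((hA.cons (e i)).cons (f i))) (f i :: l)]
          have : (fun l => A (e i :: f i :: e i :: l)) = (0 : List α → M) := by
            ext l
            rw [(hA.cons (e i)).swap, hA.eq_zero_of_cons_cons_self, neg_zero]; rfl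
          rw [this, map_zero]; rfl
        rwa [h0, smul_zero, add_zero] at this
      have h_rel : ∀ l, (∀ a ∈ l, ∃ j ∈ s, a = e j ∨ a = f j) → s.card + 1 ≤ l.length + (r + 1) →
          (listTrace e f s ^ (r + 1)) A l +
            ((r : ℝ) + 1) • (listTrace e f s ^ r) (fun l => A (e i :: f i :: l)) l = 0 := by
        intro l hl hlen
        have := h l (mono l hl) (by omega)
        rwa [trace_insert_pow hi r hA] at this
      have h_none : ∀ l, (∀ a ∈ l, ∃ j ∈ s, a = e j ∨ a = f j) →
          s.card + (r + 1 + 1) ≤ l.length → A l = 0 := by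
        refine ih (r + 1 + 1) hA fun l hl hlen => ?_
        have h₁ : ∀ j ∈ s, (listTrace e f s ^ (r + 1)) A (e j :: f j :: l) +
            ((r : ℝ) + 1) • (listTrace e f s ^ r) (fun l => A (e i :: f i :: l))
              (e j :: f j :: l) = 0 := by
          intro j hj
          refine h_rel _ (fun a ha => ?_) (by simp; omega)
          rcases List.mem_cons.mp ha with rfl | ha
          · exact ⟨j, hj, .inl rfl⟩
          rcases List.mem_cons.mp ha with rfl | ha
          · exact ⟨j, hj, .inr rfl⟩
          · exact hl a ha
        have h₂ := Finset.sum_eq_zero h₁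
        rw [Finset.sum_add_distrib, ← Finset.smul_sum] at h₂
        have h₃ := h_pair l hl hlen
        rw [pow_succ', Module.End.mul_apply, listTrace_apply] at h₃ ⊢
        rwa [h₃, smul_zero, add_zero] at h₂
      have h_both : ∀ l, (∀ a ∈ l, ∃ j ∈ s, a = e j ∨ a = f j) →
          s.card + r ≤ l.length → A (e i :: f i :: l) = 0 := by
        refine ih r ((hA.cons (e i)).cons (f i)) fun l hl hlen => ?_
        have h₁ := h_rel l hl (by omega)
        have h₂ : (listTrace e f s ^ (r + 1)) A l = 0 := by
          have : ∀ (q : ℕ) (B : List α → M) (l : List α),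
              (∀ l', (∀ a ∈ l', ∃ j ∈ s, a = e j ∨ a = f j) → l'.length = l.length + 2 * q →
                B l' = 0) →
              (∀ a ∈ l, ∃ j ∈ s, a = e j ∨ a = f j) → (listTrace e f s ^ q) B l = 0 := by
            intro q
            induction q with
            | zero => intro B l hB hl; exact hB l hl (by simp)
            | succ q ihq =>
              intro B l hB hl
              rw [pow_succ', Module.End.mul_apply, listTrace_apply]
              refine Finset.sum_eq_zero fun j hj => ihq B _ (fun l' hl' hlen' => ?_) fun a ha => ?_
              · exact hB l' hl' (by simp at hlen'; omega)
              rcases List.mem_cons.mp ha with rfl | ha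
              · exact ⟨j, hj, .inl rfl⟩
              rcases List.mem_cons.mp ha with rfl | ha
              · exact ⟨j, hj, .inr rfl⟩
              · exact hl a ha
          exact this (r + 1) A l (fun l' hl' hlen' => h_none l' hl' (by omega)) hl
        rw [h₂, zero_add] at h₁
        exact (smul_eq_zero.mp h₁).resolve_left (by positivity)
      -- split according to the occurrences of the two new letters
      have noRepeat : ∀ (x : α) (l l' : List α), l.Perm (x :: l') → x ∈ l' → A l = 0 := by
        intro x l l' hp hx
        refine eq_zero_of_perm (hp.trans ((List.perm_cons_erase hx).cons x)).symm hA ?_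
        exact hA.eq_zero_of_cons_cons_self _ _
      have letters : ∀ l' : List α, (∀ a ∈ l', ∃ j ∈ insert i s, a = e j ∨ a = f j) →
          e i ∉ l' → f i ∉ l' → ∀ a ∈ l', ∃ j ∈ s, a = e j ∨ a = f j := by
        intro l' hl' he hf a ha
        obtain ⟨j, hj, hja⟩ := hl' a ha
        rcases Finset.mem_insert.mp hj with rfl | hj
        · rcases hja with rfl | rfl
          · exact absurd ha he
          · exact absurd ha hf
        · exact ⟨j, hj, hja⟩
      by_cases he : e i ∈ l
      · have hp := List.perm_cons_erase he
        set l' := l.erase (e i)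
        have hl' : ∀ a ∈ l', ∃ j ∈ insert i s, a = e j ∨ a = f j := fun a ha =>
          hl a (hp.mem_iff.mpr (List.mem_cons_of_mem _ ha))
        have hlen' : l.length = l'.length + 1 := by simpa using hp.length_eq
        by_cases he' : e i ∈ l'
        · exact noRepeat _ _ _ hp he'
        refine eq_zero_of_perm hp.symm hA ?_
        by_cases hf : f i ∈ l'
        · have hp' := List.perm_cons_erase hf
          set l'' := l'.erase (f i)
          have hlen'' : l'.length = l''.length + 1 := by simpa using hp'.length_eq
          refine eq_zero_of_perm (hp'.cons _).symm hA ?_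
          by_cases hf' : f i ∈ l''
          · have h3 := eq_zero_of_perm (((List.perm_cons_erase hf').cons (f i)).symm)
              (hA.cons (e i)) ((hA.cons (e i)).eq_zero_of_cons_cons_self _ _)
            exact h3
          · refine h_both l'' (letters l'' (fun a ha =>
              hl' a (hp'.mem_iff.mpr (List.mem_cons_of_mem _ ha)))
              (fun h => he' (hp'.mem_iff.mpr (List.mem_cons_of_mem _ h))) hf') (by omega)
        · exact h_single _ (.inl rfl) l' (letters l' hl' he' hf) (by omega)
      · by_cases hf : f i ∈ l
        · have hp := List.perm_cons_erase hf
          set l' := l.erase (f i)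
          have hl' : ∀ a ∈ l', ∃ j ∈ insert i s, a = e j ∨ a = f j := fun a ha =>
            hl a (hp.mem_iff.mpr (List.mem_cons_of_mem _ ha))
          have hlen' : l.length = l'.length + 1 := by simpa using hp.length_eq
          by_cases hf' : f i ∈ l'
          · exact noRepeat _ _ _ hp hf'
          refine eq_zero_of_perm hp.symm hA (h_single _ (.inr rfl) l' (letters l' hl'
            (fun h => he (hp.mem_iff.mpr (List.mem_cons_of_mem _ h))) hf') (by omega))
        · exact h_none l (letters l hl he hf) (by omega)

end AltOnLists

end Lefschetz

section NullLagrangian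

open scoped ContDiff

variable {N : ℕ}

/-- The determinant of `N` covectors on `ℝ^N`. -/
noncomputable def covDet (N : ℕ) : ((Fin N → ℝ) →L[ℝ] ℝ) [⋀^Fin N]→ₗ[ℝ] ℝ :=
  (Matrix.detRowAlternating (R := ℝ) (n := Fin N)).compLinearMap
    { toFun := fun ℓ j => ℓ (Pi.single j 1)
      map_add' := fun _ _ => rfl
      map_smul' := fun _ _ => rfl }

theorem covDet_apply (ℓ : Fin N → (Fin N → ℝ) →L[ℝ] ℝ) :
    covDet N ℓ = ∑ σ : Equiv.Perm (Fin N),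
      ((Equiv.Perm.sign σ : ℤ) : ℝ) * ∏ i, ℓ i (Pi.single (σ i) 1) := by
  change Matrix.det (Matrix.of fun i j => ℓ i (Pi.single j 1)) = _
  rw [← Matrix.det_transpose, Matrix.det_apply']
  rfl

theorem continuous_covDet : Continuous (covDet N) := by
  have : (covDet N : (Fin N → (Fin N → ℝ) →L[ℝ] ℝ) → ℝ) = fun ℓ => _ := funext covDet_apply
  rw [this]
  fun_prop

theorem exists_abs_covDet_le (N : ℕ) : ∃ C : ℝ, 0 < C ∧
    ∀ ℓ : Fin N → (Fin N → ℝ) →L[ℝ] ℝ, |covDet N ℓ| ≤ C * ∏ i, ‖ℓ i‖ :=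
  (covDet N).toMultilinearMap.exists_bound_of_continuous continuous_covDet

theorem continuous_covDet_fderiv {u : Fin N → (Fin N → ℝ) → ℝ} (hu : ∀ i, ContDiff ℝ ∞ (u i)) :
    Continuous fun x => covDet N fun i => fderiv ℝ (u i) x :=
  continuous_covDet.comp (continuous_pi fun i => (hu i).continuous_fderiv (by simp))

/-- The divergence of a row of cofactors of a Jacobian matrix vanishes. -/
theorem sum_sign_mul_fderiv_prod_eq_zero {u : Fin N → (Fin N → ℝ) → ℝ}
    (hu : ∀ i, ContDiff ℝ ∞ (u i)) (i₀ : Fin N) (x : Fin N → ℝ) :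
    ∑ σ : Equiv.Perm (Fin N), ((Equiv.Perm.sign σ : ℤ) : ℝ) *
      fderiv ℝ (fun y => ∏ i ∈ Finset.univ.erase i₀, fderiv ℝ (u i) y (Pi.single (σ i) 1)) x
        (Pi.single (σ i₀) 1) = 0 := by
  have hd : ∀ i (v : Fin N → ℝ), HasFDerivAt (fun y => fderiv ℝ (u i) y v)
      ((fderiv ℝ (fderiv ℝ (u i)) x).flip v) x := by
    intro i v
    have h₁ : DifferentiableAt ℝ (fderiv ℝ (u i)) x :=
      ((hu i).fderiv_right (m := ∞) (by simp)).differentiable (by simp) x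
    exact (h₁.hasFDerivAt.clm_apply (hasFDerivAt_const v x)).congr_fderiv (by ext; simp)
  have hp : ∀ σ : Equiv.Perm (Fin N),
      fderiv ℝ (fun y => ∏ i ∈ Finset.univ.erase i₀, fderiv ℝ (u i) y (Pi.single (σ i) 1)) x
        (Pi.single (σ i₀) 1) = ∑ k ∈ Finset.univ.erase i₀,
        (∏ i ∈ (Finset.univ.erase i₀).erase k, fderiv ℝ (u i) x (Pi.single (σ i) 1)) *
        fderiv ℝ (fderiv ℝ (u k)) x (Pi.single (σ i₀) 1) (Pi.single (σ k) 1) := by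
    intro σ
    rw [(HasFDerivAt.finsetProd (fun i _ => hd i (Pi.single (σ i) 1))).fderiv]
    simp
  simp_rw [hp, Finset.mul_sum]
  rw [Finset.sum_comm]
  refine Finset.sum_eq_zero fun k hk => ?_
  have hk : k ≠ i₀ := Finset.ne_of_mem_erase hk
  have hsymm : IsSymmSndFDerivAt ℝ (u k) x :=
    (hu k).contDiffAt.isSymmSndFDerivAt (by
      simpa using WithTop.coe_le_coe.mpr (le_top : (2 : ℕ∞) ≤ ⊤))
  rw [← self_eq_neg, ← Finset.sum_neg_distrib]
  refine Fintype.sum_equiv (Equiv.mulRight (Equiv.swap i₀ k)) _ _ fun σ => ?_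
  have hprod : ∀ i ∈ (Finset.univ.erase i₀).erase k,
      fderiv ℝ (u i) x (Pi.single ((σ * Equiv.swap i₀ k) i) 1) =
        fderiv ℝ (u i) x (Pi.single (σ i) 1) := by
    intro i hi
    simp only [Finset.mem_erase] at hi
    rw [Equiv.Perm.mul_apply, Equiv.swap_apply_of_ne_of_ne hi.2.1 hi.1]
  simp only [Equiv.coe_mulRight]
  rw [Finset.prod_congr rfl hprod, Equiv.Perm.mul_apply, Equiv.Perm.mul_apply,
    Equiv.swap_apply_left, Equiv.swap_apply_right, hsymm.eq, Equiv.Perm.sign_mul,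
    Equiv.Perm.sign_swap hk.symm]
  simp

/-- Jacobians are null Lagrangians. -/
theorem integral_covDet_fderiv_eq_zero {u : Fin N → (Fin N → ℝ) → ℝ}
    (hu : ∀ i, ContDiff ℝ ∞ (u i)) (i₀ : Fin N) (hc : HasCompactSupport (u i₀)) :
    ∫ x, covDet N (fun i => fderiv ℝ (u i) x) = 0 := by
  have hsplit : ∀ x, covDet N (fun i => fderiv ℝ (u i) x) = ∑ σ : Equiv.Perm (Fin N),
      ((Equiv.Perm.sign σ : ℤ) : ℝ) * ((∏ i ∈ Finset.univ.erase i₀,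
        fderiv ℝ (u i) x (Pi.single (σ i) 1)) * fderiv ℝ (u i₀) x (Pi.single (σ i₀) 1)) := by
    intro x
    rw [covDet_apply]
    refine Finset.sum_congr rfl fun σ _ => ?_
    rw [Finset.prod_erase_mul _ _ (Finset.mem_univ i₀)]
  have hsm : ∀ i (v : Fin N → ℝ), ContDiff ℝ ∞ fun y => fderiv ℝ (u i) y v := fun i v =>
    ((hu i).fderiv_right (m := ∞) (by simp)).clm_apply contDiff_const
  have hP : ∀ σ : Equiv.Perm (Fin N), ContDiff ℝ ∞ fun x => ∏ i ∈ Finset.univ.erase i₀,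
      fderiv ℝ (u i) x (Pi.single (σ i) 1) := fun σ => contDiff_prod fun i _ => hsm i _
  have hPd : ∀ (σ : Equiv.Perm (Fin N)) (v : Fin N → ℝ), Continuous fun x => fderiv ℝ (fun x =>
      ∏ i ∈ Finset.univ.erase i₀, fderiv ℝ (u i) x (Pi.single (σ i) 1)) x v := fun σ v =>
    ((hP σ).continuous_fderiv (by simp)).clm_apply continuous_const
  have hc' : ∀ v : Fin N → ℝ, HasCompactSupport fun x => fderiv ℝ (u i₀) x v := fun v =>
    hc.fderiv_apply ℝ v
  have hInt : ∀ σ : Equiv.Perm (Fin N), Integrable fun x => (∏ i ∈ Finset.univ.erase i₀,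
      fderiv ℝ (u i) x (Pi.single (σ i) 1)) * fderiv ℝ (u i₀) x (Pi.single (σ i₀) 1) := fun σ =>
    ((hP σ).continuous.mul (hsm i₀ _).continuous).integrable_of_hasCompactSupport
      (hc' _).mul_left
  have hInt' : ∀ σ : Equiv.Perm (Fin N), Integrable fun x => fderiv ℝ (fun x =>
      ∏ i ∈ Finset.univ.erase i₀, fderiv ℝ (u i) x (Pi.single (σ i) 1)) x
        (Pi.single (σ i₀) 1) * u i₀ x := fun σ =>
    ((hPd σ _).mul (hu i₀).continuous).integrable_of_hasCompactSupport hc.mul_left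
  simp_rw [hsplit]
  rw [integral_finsetSum _ fun σ _ => (hInt σ).const_mul _]
  have hibp : ∀ σ : Equiv.Perm (Fin N), ∫ x, ((Equiv.Perm.sign σ : ℤ) : ℝ) *
      ((∏ i ∈ Finset.univ.erase i₀, fderiv ℝ (u i) x (Pi.single (σ i) 1)) *
        fderiv ℝ (u i₀) x (Pi.single (σ i₀) 1)) = - ∫ x, ((Equiv.Perm.sign σ : ℤ) : ℝ) *
      (fderiv ℝ (fun x => ∏ i ∈ Finset.univ.erase i₀, fderiv ℝ (u i) x (Pi.single (σ i) 1)) x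
        (Pi.single (σ i₀) 1) * u i₀ x) := by
    intro σ
    rw [integral_const_mul, integral_const_mul, ← mul_neg]
    congr 1
    exact integral_mul_fderiv_eq_neg_fderiv_mul_of_integrable (hInt' σ) (hInt σ)
      (((hP σ).continuous.mul (hu i₀).continuous).integrable_of_hasCompactSupport hc.mul_left)
      (fun x _ => (hP σ).differentiable (by simp) x)
      (fun x _ => (hu i₀).differentiable (by simp) x)
  simp_rw [hibp]
  rw [Finset.sum_neg_distrib, ← integral_finsetSum _ fun σ _ => (hInt' σ).const_mul _]
  simp_rw [← mul_assoc, ← Finset.sum_mul, sum_sign_mul_fderiv_prod_eq_zero hu i₀]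
  simp

/-- Smooth maps which agree off a compact set have the same Jacobian integral. -/
theorem integral_covDet_fderiv_sub_eq_zero {u v : Fin N → (Fin N → ℝ) → ℝ}
    (hu : ∀ i, ContDiff ℝ ∞ (u i)) (hv : ∀ i, ContDiff ℝ ∞ (v i))
    (hc : ∀ i, HasCompactSupport fun x => u i x - v i x) :
    ∫ x, (covDet N (fun i => fderiv ℝ (u i) x) - covDet N (fun i => fderiv ℝ (v i) x)) = 0 := by
  let w : Finset (Fin N) → Fin N → (Fin N → ℝ) → ℝ := fun s i => if i ∈ s then u i else v i
  have hw : ∀ s i, ContDiff ℝ ∞ (w s i) := by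
    intro s i
    by_cases h : i ∈ s <;> simp [w, h, hu, hv]
  have key : ∀ s, Integrable (fun x => covDet N (fun i => fderiv ℝ (w s i) x) -
      covDet N (fun i => fderiv ℝ (v i) x)) ∧
      ∫ x, (covDet N (fun i => fderiv ℝ (w s i) x) - covDet N (fun i => fderiv ℝ (v i) x)) = 0 := by
    intro s
    induction s using Finset.induction_on with
    | empty => simp [w]
    | insert i s hi ih =>
      let d : Fin N → (Fin N → ℝ) → ℝ := Function.update (w s) i fun x => u i x - v i x
      have hd : ∀ j, ContDiff ℝ ∞ (d j) := by
        intro j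
        by_cases h : j = i
        · subst h; simpa [d] using (hu j).sub (hv j)
        · simpa [d, h] using hw s j
      have hdc : HasCompactSupport (d i) := by simpa [d] using hc i
      have hstep : ∀ x, covDet N (fun j => fderiv ℝ (w (insert i s) j) x) -
          covDet N (fun j => fderiv ℝ (v j) x) =
          covDet N (fun j => fderiv ℝ (d j) x) + (covDet N (fun j => fderiv ℝ (w s j) x) -
          covDet N (fun j => fderiv ℝ (v j) x)) := by
        intro x
        have e₁ : (fun j => fderiv ℝ (w (insert i s) j) x) =
            Function.update (fun j => fderiv ℝ (w s j) x) i (fderiv ℝ (u i) x) := by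
          ext j : 1
          by_cases h : j = i
          · subst h; simp [w]
          · simp [w, h]
        have e₂ : (fun j => fderiv ℝ (d j) x) = Function.update (fun j => fderiv ℝ (w s j) x) i
            (fderiv ℝ (u i) x - fderiv ℝ (v i) x) := by
          ext j : 1
          by_cases h : j = i
          · subst h
            simp only [d, Function.update_self]
            exact fderiv_fun_sub ((hu j).differentiable (by simp) x)
              ((hv j).differentiable (by simp) x)
          · simp [d, h]
        have e₃ : (fun j => fderiv ℝ (w s j) x) =
            Function.update (fun j => fderiv ℝ (w s j) x) i (fderiv ℝ (v i) x) := by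
          ext j : 1
          by_cases h : j = i
          · subst h; simp [w, hi]
          · simp [h]
        rw [e₁, e₂, AlternatingMap.map_update_sub, ← e₃]
        ring
      have hdi : Integrable fun x => covDet N (fun j => fderiv ℝ (d j) x) := by
        refine (continuous_covDet_fderiv hd).integrable_of_hasCompactSupport ?_
        refine (hdc.fderiv ℝ).mono fun x hx => ?_
        contrapose! hx
        simp only [Function.mem_support, not_not] at hx ⊢
        exact (covDet N).map_coord_zero i hx
      simp_rw [hstep]
      exact ⟨hdi.add ih.1, by
        rw [integral_add hdi ih.1, ih.2, integral_covDet_fderiv_eq_zero hd i hdc, add_zero]⟩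
  have := (key Finset.univ).2
  simpa [w] using this

end NullLagrangian

section Smoothing

open scoped ContDiff Convolution
open ContinuousLinearMap

theorem exists_mollifier_unit (E : Type*) [NormedAddCommGroup E] [NormedSpace ℝ E]
    [FiniteDimensional ℝ E] :
    ∃ C : ℝ, 0 ≤ C ∧ ∃ T : C(E, ℝ) →ₗ[ℝ] (E → ℝ), ∀ u, ContDiff ℝ ∞ (T u) ∧
      ∀ p c B, 0 ≤ B → (∀ q ∈ ball p 1, |u q - c| ≤ B) →
        |T u p - c| ≤ B ∧ ‖fderiv ℝ (T u) p‖ ≤ C * B := by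
  borelize E
  let μ : Measure E := Measure.addHaar
  let φ : ContDiffBump (0 : E) := ⟨1 / 4, 1 / 2, by norm_num, by norm_num⟩
  let ρ : E → ℝ := φ.normed μ
  have hρ : ContDiff ℝ ∞ ρ := φ.contDiff_normed
  have hρc : HasCompactSupport ρ := φ.hasCompactSupport_normed
  have hsupp : Function.support ρ ⊆ ball 0 1 :=
    φ.support_normed_eq.subset.trans (ball_subset_ball (by norm_num [φ]))
  have hloc : ∀ u : C(E, ℝ), LocallyIntegrable u μ := fun u => u.continuous.locallyIntegrable
  have hex : ∀ u : C(E, ℝ), ConvolutionExists ρ u (lsmul ℝ ℝ) μ := fun u =>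
    hρc.convolutionExists_left _ hρ.continuous (hloc u)
  let T : C(E, ℝ) →ₗ[ℝ] (E → ℝ) :=
    { toFun := fun u => ρ ⋆[lsmul ℝ ℝ, μ] u
      map_add' := fun u v => (hex u).distrib_add (hex v)
      map_smul' := fun c u => convolution_smul }
  have hderiv : ∀ (u : C(E, ℝ)) p, HasFDerivAt (T u)
      ((fderiv ℝ ρ ⋆[(lsmul ℝ ℝ : ℝ →L[ℝ] ℝ →L[ℝ] ℝ).precompL E, μ] u) p) p := fun u p =>
    hρc.hasFDerivAt_convolution_left _ (hρ.of_le (by simp)) (hloc u) p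
  have hmean : ∀ (u : C(E, ℝ)) p c B, 0 ≤ B → (∀ q ∈ ball p 1, |u q - c| ≤ B) →
      |T u p - c| ≤ B := fun u p c B hB h =>
    dist_convolution_le hB hsupp φ.nonneg_normed φ.integral_normed
      u.continuous.aestronglyMeasurable h
  have hconst : ∀ c : ℝ, T (ContinuousMap.const E c) = fun _ => c := by
    intro c
    ext p
    have := hmean (ContinuousMap.const E c) p c 0 le_rfl (by simp)
    simpa [sub_eq_zero] using this
  have hDint : Integrable (fderiv ℝ ρ) μ :=
    (hρ.continuous_fderiv (by simp)).integrable_of_hasCompactSupport (hρc.fderiv ℝ)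
  have hDsupp : Function.support (fderiv ℝ ρ) ⊆ ball 0 1 :=
    (support_fderiv_subset ℝ).trans <| φ.tsupport_normed_eq.subset.trans
      (closedBall_subset_ball (by norm_num [φ]))
  obtain ⟨C, hC⟩ : ∃ C : ℝ, ∀ (u : C(E, ℝ)) p c B, 0 ≤ B → (∀ q ∈ ball p 1, |u q - c| ≤ B) →
      dist ((fderiv ℝ ρ ⋆[(lsmul ℝ ℝ : ℝ →L[ℝ] ℝ →L[ℝ] ℝ).precompL E, μ] u) p)
        (∫ t, (lsmul ℝ ℝ : ℝ →L[ℝ] ℝ →L[ℝ] ℝ).precompL E (fderiv ℝ ρ t) c ∂μ) ≤ C * B :=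
    ⟨_, fun u p c B hB h => dist_convolution_le' _ hB hDint hDsupp
      u.continuous.aestronglyMeasurable h⟩
  refine ⟨|C|, abs_nonneg _, T, fun u => ⟨hρc.contDiff_convolution_left _ hρ (hloc u),
    fun p c B hB h => ⟨hmean u p c B hB h, ?_⟩⟩⟩
  have hzero : (∫ t, (lsmul ℝ ℝ : ℝ →L[ℝ] ℝ →L[ℝ] ℝ).precompL E (fderiv ℝ ρ t) c ∂μ) = 0 := by
    have h₁ := hderiv (ContinuousMap.const E c) p
    rw [hconst] at h₁
    exact h₁.unique (hasFDerivAt_const c p)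
  have := hC u p c B hB h
  rw [hzero, dist_zero_right, ← (hderiv u p).fderiv] at this
  exact this.trans (mul_le_mul_of_nonneg_right (le_abs_self C) hB)

theorem exists_mollifier (E : Type*) [NormedAddCommGroup E] [NormedSpace ℝ E]
    [FiniteDimensional ℝ E] :
    ∃ C : ℝ, 0 ≤ C ∧ ∀ ε : ℝ, 0 < ε → ∃ T : C(E, ℝ) →ₗ[ℝ] (E → ℝ), ∀ u, ContDiff ℝ ∞ (T u) ∧
      ∀ p c B, 0 ≤ B → (∀ q ∈ ball p ε, |u q - c| ≤ B) →
        |T u p - c| ≤ B ∧ ‖fderiv ℝ (T u) p‖ ≤ C * B / ε := by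
  obtain ⟨C, hC, T, hT⟩ := exists_mollifier_unit E
  refine ⟨C, hC, fun ε hε => ?_⟩
  let S : C(E, E) := ⟨fun x => ε • x, by fun_prop⟩
  let T' : C(E, ℝ) →ₗ[ℝ] (E → ℝ) :=
    { toFun := fun u x => T (u.comp S) (ε⁻¹ • x)
      map_add' := fun u v => by
        ext x
        rw [ContinuousMap.add_comp, map_add]
        rfl
      map_smul' := fun c u => by
        ext x
        rw [ContinuousMap.smul_comp, map_smul]
        rfl }
  have hT' : ∀ u, T' u = fun x => T (u.comp S) (ε⁻¹ • x) := fun u => rfl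
  refine ⟨T', fun u => ⟨(hT (u.comp S)).1.comp (contDiff_const_smul _), fun p c B hB h => ?_⟩⟩
  have h₁ : ∀ q ∈ ball (ε⁻¹ • p) 1, |u.comp S q - c| ≤ B := by
    intro q hq
    refine h (ε • q) ?_
    rw [mem_ball, dist_eq_norm] at hq ⊢
    have : ε • q - p = ε • (q - ε⁻¹ • p) := by
      rw [smul_sub, smul_inv_smul₀ hε.ne']
    rw [this, norm_smul, Real.norm_of_nonneg hε.le]
    nlinarith
  obtain ⟨h₂, h₃⟩ := (hT (u.comp S)).2 _ c B hB h₁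
  refine ⟨h₂, ?_⟩
  have h₄ := fderiv_comp_smul (𝕜 := ℝ) (f := T (u.comp S)) ε⁻¹ (x := p)
  rw [hT', h₄, norm_smul, norm_inv, Real.norm_of_nonneg hε.le, div_eq_inv_mul]
  gcongr

/-- Coordinates on a compact set can be approximately recovered, by smooth functions, from an
injective continuous map. -/
theorem exists_contDiff_near_of_injOn {X W : Type*} [TopologicalSpace X]
    [NormedAddCommGroup W] [NormedSpace ℝ W] [FiniteDimensional ℝ W] {f : X → W}
    (hf : Continuous f) {K : Set X} (hK : IsCompact K) (hinj : InjOn f K) {v : X → ℝ}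
    (hv : Continuous v) {δ : ℝ} (hδ : 0 < δ) :
    ∃ g : W → ℝ, ContDiff ℝ ∞ g ∧ ∀ x ∈ K, |g (f x) - v x| < δ := by
  have : CompactSpace K := isCompact_iff_compactSpace.mp hK
  let A : Subalgebra ℝ C(K, ℝ) :=
    { carrier := {u | ∃ g : W → ℝ, ContDiff ℝ ∞ g ∧ ∀ x : K, u x = g (f x)}
      mul_mem' := by
        rintro u v ⟨g, hg, hu⟩ ⟨h, hh, hv⟩
        exact ⟨fun w => g w * h w, hg.mul hh, fun x => by simp [hu, hv]⟩
      add_mem' := by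
        rintro u v ⟨g, hg, hu⟩ ⟨h, hh, hv⟩
        exact ⟨fun w => g w + h w, hg.add hh, fun x => by simp [hu, hv]⟩
      algebraMap_mem' := fun r => ⟨fun _ => r, contDiff_const, fun x => rfl⟩ }
  have hA : A.SeparatesPoints := by
    intro x y hxy
    have hne : f x - f y ≠ 0 := fun h => hxy (Subtype.ext (hinj x.2 y.2 (sub_eq_zero.mp h)))
    obtain ⟨ℓ, -, hℓ⟩ := exists_dual_vector ℝ _ (norm_ne_zero_iff.mpr hne)
    refine ⟨fun x => ℓ (f x),
      ⟨⟨fun x => ℓ (f x), by fun_prop⟩, ⟨ℓ, ℓ.contDiff, fun x => rfl⟩, rfl⟩, ?_⟩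
    intro h
    have : ℓ (f x - f y) = 0 := by rw [map_sub, sub_eq_zero]; exact h
    rw [hℓ] at this
    exact hne (norm_eq_zero.mp (by simpa using this))
  obtain ⟨⟨u, g, hg, hu⟩, hclose⟩ :=
    ContinuousMap.exists_mem_subalgebra_near_continuous_of_separatesPoints A hA
      (fun x : K => v x) (by fun_prop) δ hδ
  refine ⟨g, hg, fun x hx => ?_⟩
  have := hclose ⟨x, hx⟩
  rwa [Real.norm_eq_abs, show u ⟨x, hx⟩ = g (f x) from hu ⟨x, hx⟩] at this

end Smoothing

section Degree

open scoped ContDiff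

theorem covDet_proj (N : ℕ) :
    covDet N (fun i => ContinuousLinearMap.proj (R := ℝ) (φ := fun _ : Fin N => ℝ) i) = 1 := by
  change Matrix.det (Matrix.of fun i j => (Pi.single j 1 : Fin N → ℝ) i) = 1
  rw [← Matrix.det_one (n := Fin N) (R := ℝ)]
  congr 1
  ext i j
  simp [Matrix.one_apply, Pi.single_apply]

theorem deriv_smoothTransition_eq_zero {x : ℝ} (hx : x ∉ Icc (0 : ℝ) 1) :
    deriv Real.smoothTransition x = 0 := by
  rw [mem_Icc, not_and_or, not_le, not_le] at hx
  rcases hx with hx | hx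
  · have : Real.smoothTransition =ᶠ[𝓝 x] fun _ => 0 := by
      filter_upwards [Iio_mem_nhds hx] with y hy
      exact Real.smoothTransition.zero_of_nonpos (le_of_lt hy)
    rw [this.deriv_eq, deriv_const]
  · have : Real.smoothTransition =ᶠ[𝓝 x] fun _ => 1 := by
      filter_upwards [Ioi_mem_nhds hx] with y hy
      exact Real.smoothTransition.one_of_one_le (le_of_lt hy)
    rw [this.deriv_eq, deriv_const]

theorem integral_deriv_smoothTransition : ∫ x, deriv Real.smoothTransition x = 1 := by
  have hsm : ContDiff ℝ ∞ Real.smoothTransition := Real.smoothTransition.contDiff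
  have hInt : Integrable (deriv Real.smoothTransition) :=
    (hsm.continuous_deriv (by simp)).integrable_of_hasCompactSupport
      (HasCompactSupport.intro isCompact_Icc fun x hx => deriv_smoothTransition_eq_zero hx)
  rw [integral_of_hasDerivAt_of_tendsto (m := 0) (n := 1)
    (fun x => (hsm.differentiable (by simp) x).hasDerivAt) hInt, sub_zero]
  · refine tendsto_const_nhds.congr' ?_
    filter_upwards [Filter.eventually_le_atBot (0 : ℝ)] with x hx
    exact (Real.smoothTransition.zero_of_nonpos hx).symm
  · refine tendsto_const_nhds.congr' ?_
    filter_upwards [Filter.eventually_ge_atTop (1 : ℝ)] with x hx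
    exact (Real.smoothTransition.one_of_one_le hx).symm

theorem covDet_fderiv_smoothTransition {N : ℕ} (x : Fin N → ℝ) :
    covDet N (fun i => fderiv ℝ (fun y : Fin N → ℝ => Real.smoothTransition (y i)) x) =
      ∏ i, deriv Real.smoothTransition (x i) := by
  have : (fun i => fderiv ℝ (fun y : Fin N → ℝ => Real.smoothTransition (y i)) x) = fun i =>
      deriv Real.smoothTransition (x i) •
        ContinuousLinearMap.proj (R := ℝ) (φ := fun _ : Fin N => ℝ) i := by
    ext i : 1
    have h₁ : HasDerivAt Real.smoothTransition (deriv Real.smoothTransition (x i)) (x i) :=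
      ((Real.smoothTransition.contDiff (n := 1)).differentiable (by simp) _).hasDerivAt
    exact (h₁.comp_hasFDerivAt x
      (ContinuousLinearMap.proj (R := ℝ) (φ := fun _ : Fin N => ℝ) i).hasFDerivAt).fderiv
  rw [this]
  refine ((covDet N).toMultilinearMap.map_smul_univ _ _).trans ?_
  change (∏ i, deriv Real.smoothTransition (x i)) • covDet N _ = _
  rw [covDet_proj, smul_eq_mul, mul_one]

/-- A smooth self-map of `ℝ^N` which is close to the identity on a large ball has degree one
over the unit cube. -/
theorem integral_mul_covDet_fderiv_eq_one {N : ℕ} (χ : ContDiffBump (0 : Fin N → ℝ))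
    (hin : χ.rIn = 3) (hout : χ.rOut = 4) {h : Fin N → (Fin N → ℝ) → ℝ}
    (hh : ∀ i, ContDiff ℝ ∞ (h i)) (hclose : ∀ x ∈ ball (0 : Fin N → ℝ) 5, ∀ i, |h i x - x i| < 1) :
    ∫ x, χ x * covDet N (fun i => fderiv ℝ (fun y => Real.smoothTransition (h i y)) x) = 1 := by
  have hΨ : ContDiff ℝ ∞ Real.smoothTransition := Real.smoothTransition.contDiff
  have hχ : ContDiff ℝ ∞ χ := χ.contDiff
  let v : Fin N → (Fin N → ℝ) → ℝ := fun i y => Real.smoothTransition (y i)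
  let u : Fin N → (Fin N → ℝ) → ℝ := fun i y =>
    v i y + χ y * (Real.smoothTransition (h i y) - v i y)
  have hv : ∀ i, ContDiff ℝ ∞ (v i) := fun i => hΨ.comp (contDiff_apply ℝ ℝ i)
  have hu : ∀ i, ContDiff ℝ ∞ (u i) := fun i =>
    (hv i).add (hχ.mul ((hΨ.comp (hh i)).sub (hv i)))
  have hsub := integral_covDet_fderiv_sub_eq_zero hu hv (fun i => by
    have : (fun x => u i x - v i x) = fun x => χ x * (Real.smoothTransition (h i x) - v i x) := by
      ext x; simp [u]
    rw [this]
    exact χ.hasCompactSupport.mul_right)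
  -- outside the cube `[-2, 2]^N` some coordinate of every map is locally constant
  have hfar : ∀ x : Fin N → ℝ, 2 < ‖x‖ → ∃ i, ∃ c : ℝ, (∀ᶠ y in 𝓝 x, v i y = c) ∧
      (x ∈ ball (0 : Fin N → ℝ) 5 → ∀ᶠ y in 𝓝 x, Real.smoothTransition (h i y) = c) := by
    intro x hx
    obtain ⟨i, hi⟩ : ∃ i, 2 < |x i| := by
      by_contra! hcon
      exact absurd hx (not_lt.mpr ((pi_norm_le_iff_of_nonneg (by norm_num)).mpr hcon))
    have hcont : Continuous fun y : Fin N → ℝ => y i := continuous_apply i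
    rcases lt_abs.mp hi with hi | hi
    · have hnear : ∀ᶠ y in 𝓝 x, 2 < y i := hcont.continuousAt.eventually (Ioi_mem_nhds hi)
      refine ⟨i, 1, hnear.mono fun y hy => Real.smoothTransition.one_of_one_le (by linarith),
        fun hb => ?_⟩
      filter_upwards [hnear, isOpen_ball.mem_nhds hb] with y hy hyb
      have := abs_lt.mp (hclose y hyb i)
      exact Real.smoothTransition.one_of_one_le (by linarith)
    · have hnear : ∀ᶠ y in 𝓝 x, y i < -2 :=
        hcont.continuousAt.eventually (Iio_mem_nhds (by linarith))
      refine ⟨i, 0, hnear.mono fun y hy => Real.smoothTransition.zero_of_nonpos (by linarith),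
        fun hb => ?_⟩
      filter_upwards [hnear, isOpen_ball.mem_nhds hb] with y hy hyb
      have := abs_lt.mp (hclose y hyb i)
      exact Real.smoothTransition.zero_of_nonpos (by linarith)
  have hloc : ∀ {w : Fin N → (Fin N → ℝ) → ℝ} {x : Fin N → ℝ} {i : Fin N} {c : ℝ},
      (∀ᶠ y in 𝓝 x, w i y = c) → covDet N (fun i => fderiv ℝ (w i) x) = 0 := by
    intro w x i c hw
    refine (covDet N).map_coord_zero i ?_
    have : w i =ᶠ[𝓝 x] fun _ => c := hw
    rw [this.fderiv_eq, fderiv_const_apply]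
  have heq : ∀ x, covDet N (fun i => fderiv ℝ (u i) x) =
      χ x * covDet N (fun i => fderiv ℝ (fun y => Real.smoothTransition (h i y)) x) := by
    intro x
    by_cases hx : ‖x‖ < 3
    · have hone : ∀ᶠ y in 𝓝 x, χ y = 1 := by
        filter_upwards [isOpen_ball.mem_nhds (mem_ball_zero_iff.mpr hx)] with y hy
        exact χ.one_of_mem_closedBall (by rw [hin]; exact ball_subset_closedBall hy)
      rw [hone.self_of_nhds, one_mul]
      congr 1
      ext i : 1
      refine Filter.EventuallyEq.fderiv_eq ?_
      filter_upwards [hone] with y hy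
      simp [u, hy]
    · obtain ⟨i, c, hvc, hhc⟩ := hfar x (by linarith)
      by_cases hb : x ∈ ball (0 : Fin N → ℝ) 5
      · rw [hloc (w := fun i y => Real.smoothTransition (h i y)) (hhc hb), mul_zero,
          hloc (i := i) (c := c)]
        filter_upwards [hvc, hhc hb] with y hy hy'
        simp [u, hy, hy']
      · have hx5 : 5 ≤ ‖x‖ := by simpa using hb
        have hzero : ∀ᶠ y in 𝓝 x, χ y = 0 := by
          filter_upwards [(isOpen_lt continuous_const continuous_norm).mem_nhds
            (show (4 : ℝ) < ‖x‖ by linarith)] with y hy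
          refine χ.zero_of_le_dist ?_
          rw [hout, dist_zero_right]
          exact le_of_lt hy
        rw [hzero.self_of_nhds, zero_mul, hloc (i := i) (c := c)]
        filter_upwards [hvc, hzero] with y hy hy'
        simp [u, hy, hy']
  simp_rw [heq] at hsub
  have hcov : Continuous fun x => covDet N (fun i =>
      fderiv ℝ (fun y => Real.smoothTransition (h i y)) x) :=
    continuous_covDet_fderiv fun i => hΨ.comp (hh i)
  have hprod : ∀ x, covDet N (fun i => fderiv ℝ (v i) x) =
      ∏ i, deriv Real.smoothTransition (x i) := covDet_fderiv_smoothTransition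
  simp_rw [hprod] at hsub
  have hInt : Integrable fun x : Fin N → ℝ => ∏ i, deriv Real.smoothTransition (x i) := by
    have hΨ' : Continuous (deriv Real.smoothTransition) := hΨ.continuous_deriv (by simp)
    refine Continuous.integrable_of_hasCompactSupport (by fun_prop)
      (HasCompactSupport.intro (isCompact_univ_pi fun _ => isCompact_Icc (a := (0 : ℝ)) (b := 1))
        fun x hx => ?_)
    simp only [mem_univ_pi, not_forall] at hx
    obtain ⟨i, hi⟩ := hx
    exact Finset.prod_eq_zero (Finset.mem_univ i) (deriv_smoothTransition_eq_zero hi)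
  have hInt' : Integrable fun x => χ x * covDet N (fun i =>
      fderiv ℝ (fun y => Real.smoothTransition (h i y)) x) :=
    (χ.continuous.mul hcov).integrable_of_hasCompactSupport χ.hasCompactSupport.mul_right
  rw [integral_sub hInt' hInt, sub_eq_zero] at hsub
  rw [hsub, integral_fintype_prod_volume_eq_prod (fun _ : Fin N => deriv Real.smoothTransition)]
  simp [integral_deriv_smoothTransition]

end Degree

section ListDet

open scoped ContDiff

variable {N : ℕ}

/-- The determinant of a list of covectors on `ℝ^N`, set to zero if there are not `N` of them. -/
noncomputable def listDet (N : ℕ) (L : List ((Fin N → ℝ) →L[ℝ] ℝ)) : ℝ :=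
  if h : L.length = N then covDet N (fun i => L.get (i.cast h.symm)) else 0

theorem listDet_of_length_ne {L : List ((Fin N → ℝ) →L[ℝ] ℝ)} (h : L.length ≠ N) :
    listDet N L = 0 := dif_neg h

theorem listDet_ofFn (ℓ : Fin N → (Fin N → ℝ) →L[ℝ] ℝ) :
    listDet N (List.ofFn ℓ) = covDet N ℓ := by
  rw [listDet, dif_pos (List.length_ofFn)]
  congr 1
  ext i : 1
  simp

theorem altOnLists_listDet (N : ℕ) : AltOnLists (listDet N) := by
  intro l₁ x y l₂
  by_cases h : (l₁ ++ x :: y :: l₂).length = N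
  · have h' : (l₁ ++ y :: x :: l₂).length = N := by simpa using h
    rw [listDet, listDet, dif_pos h, dif_pos h']
    have hlen : l₁.length + 1 < N := by simp at h; omega
    let p : Fin N := ⟨l₁.length, by omega⟩
    let q : Fin N := ⟨l₁.length + 1, hlen⟩
    have hpq : p ≠ q := by simp [p, q, Fin.ext_iff]
    rw [← (covDet N).map_swap _ hpq]
    congr 1
    ext i : 1
    simp only [Function.comp_apply, List.get_eq_getElem, Fin.val_cast]
    by_cases hip : i = p
    · subst hip
      rw [Equiv.swap_apply_left]
      simp [p, q]
    by_cases hiq : i = q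
    · subst hiq
      rw [Equiv.swap_apply_right]
      simp [p, q]
    rw [Equiv.swap_apply_of_ne_of_ne hip hiq]
    have h1 : i.1 ≠ l₁.length := fun h => hip (Fin.ext h)
    have h2 : i.1 ≠ l₁.length + 1 := fun h => hiq (Fin.ext h)
    rcases lt_or_ge i.1 l₁.length with hlt | hge
    · rw [List.getElem_append_left hlt, List.getElem_append_left hlt]
    · rw [List.getElem_append_right hge, List.getElem_append_right hge]
      obtain ⟨d, hd⟩ : ∃ d, i.1 - l₁.length = d + 2 := ⟨i.1 - l₁.length - 2, by omega⟩
      simp [hd]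
  · have h' : (l₁ ++ y :: x :: l₂).length ≠ N := by simpa using h
    rw [listDet_of_length_ne h, listDet_of_length_ne h', neg_zero]

theorem listDet_cons {n : ℕ} {L : List ((Fin (n + 1) → ℝ) →L[ℝ] ℝ)} (h : L.length = n)
    (ℓ : (Fin (n + 1) → ℝ) →L[ℝ] ℝ) :
    listDet (n + 1) (ℓ :: L) = covDet (n + 1) (Fin.cons ℓ fun i => L.get (i.cast h.symm)) := by
  rw [listDet, dif_pos (by simp [h])]
  congr 1
  ext i : 1
  refine Fin.cases ?_ (fun i => ?_) i
  · rfl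
  · rfl

/-- The determinant of a list of covectors is linear in the first one. -/
noncomputable def listDetHead {N : ℕ} (L : List ((Fin N → ℝ) →L[ℝ] ℝ)) :
    ((Fin N → ℝ) →L[ℝ] ℝ) →ₗ[ℝ] ℝ where
  toFun ℓ := listDet N (ℓ :: L)
  map_add' ℓ ℓ' := by
    by_cases h : L.length + 1 = N
    · obtain ⟨n, rfl⟩ : ∃ n, N = n + 1 := ⟨_, h.symm⟩
      have h : L.length = n := by omega
      rw [listDet_cons h, listDet_cons h, listDet_cons h]
      exact (covDet _).toMultilinearMap.cons_add _ _ _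
    · simp [listDet, h]
  map_smul' c ℓ := by
    by_cases h : L.length + 1 = N
    · obtain ⟨n, rfl⟩ : ∃ n, N = n + 1 := ⟨_, h.symm⟩
      have h : L.length = n := by omega
      rw [listDet_cons h, listDet_cons h]
      exact (covDet _).toMultilinearMap.cons_smul _ _ _
    · simp [listDet, h]

theorem listDetHead_apply (L : List ((Fin N → ℝ) →L[ℝ] ℝ)) (ℓ : (Fin N → ℝ) →L[ℝ] ℝ) :
    listDetHead L ℓ = listDet N (ℓ :: L) := rfl

theorem exists_abs_listDet_le (N : ℕ) : ∃ C : ℝ, 0 < C ∧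
    ∀ L : List ((Fin N → ℝ) →L[ℝ] ℝ), |listDet N L| ≤ C * (L.map fun ℓ => ‖ℓ‖).prod := by
  obtain ⟨C, hC, h⟩ := exists_abs_covDet_le N
  refine ⟨C, hC, fun L => ?_⟩
  by_cases hL : L.length = N
  · rw [listDet, dif_pos hL]
    refine (h _).trans_eq ?_
    rw [← List.prod_ofFn]
    congr 2
    refine List.ext_get (by simp [hL]) fun i h₁ h₂ => by simp
  · rw [listDet_of_length_ne hL, abs_zero]
    have : 0 ≤ (L.map fun ℓ => ‖ℓ‖).prod := List.prod_nonneg (by simp)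
    positivity

theorem continuous_listDet_fderiv {U : List ((Fin N → ℝ) → ℝ)} (hU : ∀ u ∈ U, ContDiff ℝ ∞ u) :
    Continuous fun x => listDet N (U.map fun u => fderiv ℝ u x) := by
  by_cases h : U.length = N
  · have h' : ∀ x, (U.map fun u => fderiv ℝ u x).length = N := by simpa using h
    simp_rw [listDet, dif_pos (h' _)]
    refine continuous_covDet.comp (continuous_pi fun i => ?_)
    simp only [List.get_eq_getElem, List.getElem_map]
    have hi : (i : ℕ) < U.length := by omega
    exact (hU U[i.1] (List.getElem_mem hi)).continuous_fderiv (by simp)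
  · simp_rw [listDet, List.length_map, dif_neg h]
    exact continuous_const

theorem integral_listDet_fderiv_eq_zero {a : (Fin N → ℝ) → ℝ} {U : List ((Fin N → ℝ) → ℝ)}
    (ha : ContDiff ℝ ∞ a) (hac : HasCompactSupport a) (hU : ∀ u ∈ U, ContDiff ℝ ∞ u) :
    ∫ x, listDet N (fderiv ℝ a x :: U.map fun u => fderiv ℝ u x) = 0 := by
  by_cases h : U.length + 1 = N
  · obtain ⟨n, rfl⟩ : ∃ n, N = n + 1 := ⟨_, h.symm⟩
    have h : U.length = n := by omega
    rw [← integral_covDet_fderiv_eq_zero (u := Fin.cons a fun i => U.get (i.cast h.symm)) ?_ 0 hac]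
    · congr 1
      ext x
      rw [listDet_cons (by simpa using h)]
      congr 1
      ext i : 1
      refine Fin.cases rfl (fun i => ?_) i
      simp
    · exact Fin.cases ha fun i => hU _ (List.get_mem _ _)
  · simp [listDet, h]

/-- Integration by parts for Jacobian determinants. -/
theorem integral_mul_listDet_fderiv {a u : (Fin N → ℝ) → ℝ} {U : List ((Fin N → ℝ) → ℝ)}
    (ha : ContDiff ℝ ∞ a) (hac : HasCompactSupport a) (hu : ContDiff ℝ ∞ u)
    (hU : ∀ v ∈ U, ContDiff ℝ ∞ v) :
    ∫ x, a x * listDet N (fderiv ℝ u x :: U.map fun v => fderiv ℝ v x) =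
      - ∫ x, u x * listDet N (fderiv ℝ a x :: U.map fun v => fderiv ℝ v x) := by
  have hcons : ∀ w, ContDiff ℝ ∞ w → Continuous fun x =>
      listDet N (fderiv ℝ w x :: U.map fun v => fderiv ℝ v x) := fun w hw =>
    continuous_listDet_fderiv (U := w :: U) (by simpa using ⟨hw, hU⟩)
  have hi₁ : Integrable fun x => a x * listDet N (fderiv ℝ u x :: U.map fun v => fderiv ℝ v x) :=
    (ha.continuous.mul (hcons u hu)).integrable_of_hasCompactSupport hac.mul_right
  have hi₂ : Integrable fun x => u x * listDet N (fderiv ℝ a x :: U.map fun v => fderiv ℝ v x) := by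
    refine (hu.continuous.mul (hcons a ha)).integrable_of_hasCompactSupport
      ((hac.fderiv ℝ).mono fun x hx => ?_)
    contrapose! hx
    simp only [Function.mem_support, not_not] at hx ⊢
    rw [Pi.mul_apply, hx, ← listDetHead_apply, map_zero, mul_zero]
  rw [eq_neg_iff_add_eq_zero, ← integral_add hi₁ hi₂]
  rw [← integral_listDet_fderiv_eq_zero (ha.mul hu) hac.mul_right hU]
  congr 1
  ext x
  rw [fderiv_fun_mul (ha.differentiable (by simp) x) (hu.differentiable (by simp) x)]
  simp only [← listDetHead_apply, map_add, map_smul, smul_eq_mul]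

/-- Stokes' formula for `a ∧ dθ ∧ σ`, where `θ = dt + 2 ∑ (x dy - y dx)` and `σ` is the wedge
product of the differentials of the functions in `U`. -/
theorem sum_integral_mul_listDet_fderiv {ι : Type*} [Fintype ι] {a t : (Fin N → ℝ) → ℝ}
    {x y : ι → (Fin N → ℝ) → ℝ} {U : List ((Fin N → ℝ) → ℝ)}
    (ha : ContDiff ℝ ∞ a) (hac : HasCompactSupport a) (ht : ContDiff ℝ ∞ t)
    (hx : ∀ j, ContDiff ℝ ∞ (x j)) (hy : ∀ j, ContDiff ℝ ∞ (y j)) (hU : ∀ v ∈ U, ContDiff ℝ ∞ v) :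
    4 * ∑ j, ∫ p, a p *
        listDet N (fderiv ℝ (x j) p :: fderiv ℝ (y j) p :: U.map fun v => fderiv ℝ v p) =
      - ∫ p, listDet N (fderiv ℝ a p :: (fderiv ℝ t p + (2 : ℝ) • ∑ j,
          (x j p • fderiv ℝ (y j) p - y j p • fderiv ℝ (x j) p)) ::
        U.map fun v => fderiv ℝ v p) := by
  have hcont : ∀ w, ContDiff ℝ ∞ w → Continuous fun p =>
      listDet N (fderiv ℝ a p :: fderiv ℝ w p :: U.map fun v => fderiv ℝ v p) := fun w hw =>
    continuous_listDet_fderiv (U := a :: w :: U) (by simpa using ⟨ha, hw, hU⟩)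
  have hInt : ∀ c w, Continuous c → ContDiff ℝ ∞ w → Integrable fun p => c p *
      listDet N (fderiv ℝ a p :: fderiv ℝ w p :: U.map fun v => fderiv ℝ v p) := by
    intro c w hc hw
    refine (hc.mul (hcont w hw)).integrable_of_hasCompactSupport
      ((hac.fderiv ℝ).mono fun p hp => ?_)
    contrapose! hp
    simp only [Function.mem_support, not_not] at hp ⊢
    rw [Pi.mul_apply, hp, ← listDetHead_apply, map_zero, mul_zero]
  have hexp : ∀ p, listDet N (fderiv ℝ a p :: (fderiv ℝ t p + (2 : ℝ) • ∑ j,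
          (x j p • fderiv ℝ (y j) p - y j p • fderiv ℝ (x j) p)) ::
        U.map fun v => fderiv ℝ v p) =
      1 * listDet N (fderiv ℝ a p :: fderiv ℝ t p :: U.map fun v => fderiv ℝ v p) +
      2 * ∑ j, (x j p *
          listDet N (fderiv ℝ a p :: fderiv ℝ (y j) p :: U.map fun v => fderiv ℝ v p) -
        y j p *
          listDet N (fderiv ℝ a p :: fderiv ℝ (x j) p :: U.map fun v => fderiv ℝ v p)) := by
    intro p
    simp only [(altOnLists_listDet N).swap (fderiv ℝ a p), ← listDetHead_apply, map_add, map_smul,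
      map_sum, map_sub, smul_eq_mul]
    simp only [mul_neg, sub_neg_eq_add, one_mul, neg_add, Finset.mul_sum,
      ← Finset.sum_neg_distrib]
    congr 1
    exact Finset.sum_congr rfl fun j _ => by ring
  simp_rw [hexp]
  have hsum : ∀ j, Integrable fun p => x j p *
          listDet N (fderiv ℝ a p :: fderiv ℝ (y j) p :: U.map fun v => fderiv ℝ v p) -
        y j p *
          listDet N (fderiv ℝ a p :: fderiv ℝ (x j) p :: U.map fun v => fderiv ℝ v p) := fun j =>
    (hInt _ _ (hx j).continuous (hy j)).sub (hInt _ _ (hy j).continuous (hx j))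
  rw [integral_add (hInt _ t continuous_const ht)
    ((integrable_finsetSum _ fun j _ => hsum j).const_mul 2), integral_const_mul,
    integral_const_mul, integral_finsetSum _ fun j _ => hsum j]
  have h₀ : ∫ p, listDet N (fderiv ℝ a p :: fderiv ℝ t p :: U.map fun v => fderiv ℝ v p) = 0 :=
    integral_listDet_fderiv_eq_zero (U := t :: U) ha hac (by simpa using ⟨ht, hU⟩)
  have h₁ : ∀ j, ∫ p, (x j p *
          listDet N (fderiv ℝ a p :: fderiv ℝ (y j) p :: U.map fun v => fderiv ℝ v p) -
        y j p *
          listDet N (fderiv ℝ a p :: fderiv ℝ (x j) p :: U.map fun v => fderiv ℝ v p)) =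
      - 2 * ∫ p, a p *
        listDet N (fderiv ℝ (x j) p :: fderiv ℝ (y j) p :: U.map fun v => fderiv ℝ v p) := by
    intro j
    rw [integral_sub (hInt _ _ (hx j).continuous (hy j)) (hInt _ _ (hy j).continuous (hx j))]
    have e₁ := integral_mul_listDet_fderiv (U := y j :: U) ha hac (hx j)
      (by simpa using ⟨hy j, hU⟩)
    have e₂ := integral_mul_listDet_fderiv (U := x j :: U) ha hac (hy j)
      (by simpa using ⟨hx j, hU⟩)
    simp only [List.map_cons] at e₁ e₂
    simp_rw [(altOnLists_listDet N).swap (fderiv ℝ (y j) _), mul_neg, integral_neg] at e₂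
    linarith
  rw [h₀, Finset.sum_congr rfl fun j _ => h₁ j, ← Finset.mul_sum]
  ring

end ListDet

section Asymptotics

open Filter
open scoped ContDiff

variable {N : ℕ}

theorem tendsto_integral_zero_of_abs_le {φ : ℕ → (Fin N → ℝ) → ℝ} {S : Set (Fin N → ℝ)}
    {β : ℕ → ℝ} (hS : IsCompact S) (hβ : Tendsto β atTop (𝓝 0)) (h0 : ∀ k, ∀ p ∉ S, φ k p = 0)
    (h : ∀ k, ∀ p ∈ S, |φ k p| ≤ β k) : Tendsto (fun k => ∫ p, φ k p) atTop (𝓝 0) := by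
  refine squeeze_zero_norm (a := fun k => β k * volume.real S) (fun k => ?_)
    (by simpa using hβ.mul_const (volume.real S))
  rw [← setIntegral_eq_integral_of_forall_compl_eq_zero (h0 k)]
  exact norm_setIntegral_le_of_norm_le_const hS.measure_lt_top (h k)

/-- The submodule of sequences converging to zero. -/
def nullSeq : Submodule ℝ (ℕ → ℝ) where
  carrier := {u | Tendsto u atTop (𝓝 0)}
  add_mem' hu hv := (add_zero (0 : ℝ)) ▸ Tendsto.add hu hv
  zero_mem' := tendsto_const_nhds
  smul_mem' c _ hu := (mul_zero c) ▸ Tendsto.const_mul c hu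

theorem mem_nullSeq {u : ℕ → ℝ} : u ∈ nullSeq ↔ Tendsto u atTop (𝓝 0) := Iff.rfl

/-- The pullback under `F` of the contact form `dt + 2 ∑ (x dy - y dx)` of the Heisenberg group. -/
noncomputable def contactForm (n : ℕ) (F : (Fin N → ℝ) → Fin (2 * n + 1) → ℝ) (p : Fin N → ℝ) :
    (Fin N → ℝ) →L[ℝ] ℝ :=
  fderiv ℝ (fun q => F q (tI n)) p + (2 : ℝ) • ∑ j,
    (F p (xI n j) • fderiv ℝ (fun q => F q (yI n j)) p -
      F p (yI n j) • fderiv ℝ (fun q => F q (xI n j)) p)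

theorem exists_eq_xI_or_eq_yI {n : ℕ} {i : Fin (2 * n + 1)} (hi : i ≠ tI n) :
    ∃ j, i = xI n j ∨ i = yI n j := by
  have h : i.1 ≠ 2 * n := fun h => hi (Fin.ext h)
  have hlt := i.2
  refine ⟨⟨i.1 / 2, by omega⟩, ?_⟩
  simp only [xI, yI, Fin.ext_iff]
  omega

theorem tendsto_integral_horizontal {n : ℕ} {F : ℕ → (Fin (n + 1) → ℝ) → Fin (2 * n + 1) → ℝ}
    {a : ℕ → (Fin (n + 1) → ℝ) → ℝ} {S : Set (Fin (n + 1) → ℝ)} {δ η : ℕ → ℝ} {C : ℝ}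
    (hn : 1 ≤ n) (hF : ∀ k i, ContDiff ℝ ∞ fun p => F k p i) (ha : ∀ k, ContDiff ℝ ∞ (a k))
    (hS : IsCompact S) (haS : ∀ k, tsupport (a k) ⊆ S) (hC : 0 ≤ C) (hδ : ∀ k, 0 ≤ δ k)
    (hη : ∀ k, 0 ≤ η k) (hlim : Tendsto (fun k => δ k ^ n * η k) atTop (𝓝 0))
    (hda : ∀ k, ∀ p ∈ S, ‖fderiv ℝ (a k) p‖ ≤ C * δ k)
    (hdF : ∀ k, ∀ p ∈ S, ∀ i, ‖fderiv ℝ (fun q => F k q i) p‖ ≤ δ k)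
    (hθ : ∀ k, ∀ p ∈ S, ‖contactForm n (F k) p‖ ≤ η k)
    (κ : Fin (n + 1) → Fin (2 * n + 1)) (hκ : ∀ i, κ i ≠ tI n) :
    Tendsto (fun k => ∫ p, a k p *
      covDet (n + 1) fun i => fderiv ℝ (fun q => F k q (κ i)) p) atTop (𝓝 0) := by
  have hac : ∀ k, HasCompactSupport (a k) := fun k =>
    hS.of_isClosed_subset (isClosed_tsupport _) (haS k)
  let u : List (Fin (2 * n + 1)) → ℕ → ℝ := fun l k =>
    ∫ p, a k p * listDet (n + 1) (l.map fun i => fderiv ℝ (fun q => F k q i) p)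
  have hu : AltOnLists fun l => nullSeq.mkQ (u l) := by
    intro l₁ x y l₂
    rw [← map_neg]
    refine congrArg _ (funext fun k => ?_)
    simp only [u, Pi.neg_apply, ← integral_neg, ← mul_neg, List.map_append, List.map_cons]
    congr 1
    ext p
    rw [altOnLists_listDet]
  have htrace : ∀ l : List (Fin (2 * n + 1)),
      Tendsto (∑ j, u (xI n j :: yI n j :: l)) atTop (𝓝 0) := by
    intro l
    by_cases hl : l.length + 2 = n + 1
    swap
    · have : ∑ j, u (xI n j :: yI n j :: l) = 0 := by
        refine Finset.sum_eq_zero fun j _ => funext fun k => ?_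
        simp only [u, Pi.zero_apply]
        simp_rw [listDet_of_length_ne (N := n + 1)
          (L := (xI n j :: yI n j :: l).map fun i => fderiv ℝ (fun q => F k q i) _)
          (by simpa using hl), mul_zero, integral_zero]
      rw [this]
      exact tendsto_const_nhds
    obtain ⟨D, hD, hdet⟩ := exists_abs_listDet_le (n + 1)
    have key : ∀ k, (∑ j, u (xI n j :: yI n j :: l)) k = (-1 / 4) *
        ∫ p, listDet (n + 1) (fderiv ℝ (a k) p :: contactForm n (F k) p ::
          l.map fun i => fderiv ℝ (fun q => F k q i) p) := by
      intro k
      have h := sum_integral_mul_listDet_fderiv (U := l.map fun i q => F k q i) (ha k) (hac k)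
        (hF k (tI n)) (fun j => hF k (xI n j)) (fun j => hF k (yI n j)) (by
          intro v hv
          obtain ⟨i, -, rfl⟩ := List.mem_map.mp hv
          exact hF k i)
      simp only [List.map_map, Function.comp_def] at h
      simp only [Finset.sum_apply, u, List.map_cons, contactForm]
      linarith
    rw [funext key]
    rw [show (0 : ℝ) = -1 / 4 * 0 by simp]
    refine Tendsto.const_mul _ (tendsto_integral_zero_of_abs_le
      (β := fun k => D * C * (δ k ^ n * η k)) hS (by simpa using hlim.const_mul (D * C)) ?_ ?_)
    · intro k p hp
      have : fderiv ℝ (a k) p = 0 := by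
        by_contra h
        exact hp (haS k (support_fderiv_subset ℝ h))
      rw [this, ← listDetHead_apply, map_zero]
    · intro k p hp
      refine (hdet _).trans ?_
      have hprod : (l.map fun i => ‖fderiv ℝ (fun q => F k q i) p‖).prod ≤ δ k ^ (n - 1) := by
        have hlen : n - 1 = l.length := by omega
        rw [hlen]
        clear hl hlen key
        induction l with
        | nil => simp
        | cons i l ih =>
          rw [List.map_cons, List.prod_cons, List.length_cons, pow_succ']
          exact mul_le_mul (hdF k p hp i) ih (List.prod_nonneg (by simp)) (hδ k)
      simp only [List.map_cons, List.prod_cons, List.map_map, Function.comp_def]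
      have hpow : δ k ^ n = δ k * δ k ^ (n - 1) := by
        rw [← pow_succ', Nat.sub_add_cancel hn]
      calc _ ≤ D * ((C * δ k) * (η k * δ k ^ (n - 1))) := by
            have := hδ k
            have := hη k
            gcongr
            · refine mul_nonneg (norm_nonneg _) (List.prod_nonneg ?_)
              simp
            · exact hda k p hp
            · refine List.prod_nonneg ?_
              simp
            · exact hθ k p hp
        _ = _ := by rw [hpow]; ring
  have hzero : nullSeq.mkQ (u (List.ofFn κ)) = 0 := by
    refine AltOnLists.eq_zero_of_trace_pow_eq_zero (e := xI n) (f := yI n) Finset.univ 1 hu ?_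
      (List.ofFn κ) ?_ (by simp)
    · intro l _ _
      rw [pow_one, listTrace_apply, ← map_sum, Submodule.mkQ_apply,
        Submodule.Quotient.mk_eq_zero, mem_nullSeq]
      exact htrace l
    · intro i hi
      obtain ⟨m, rfl⟩ := List.mem_ofFn.mp hi
      obtain ⟨j, hj⟩ := exists_eq_xI_or_eq_yI (hκ m)
      exact ⟨j, Finset.mem_univ j, hj⟩
  rw [Submodule.mkQ_apply, Submodule.Quotient.mk_eq_zero, mem_nullSeq] at hzero
  simpa only [u, List.map_ofFn, listDet_ofFn, Function.comp_def] using hzero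

/-- The coefficients of the form `∑ (2 y dx - 2 x dy)`, that is, of `dt` minus the contact form. -/
noncomputable def contactCoeff (n : ℕ) (i : Fin (2 * n + 1)) (w : Fin (2 * n + 1) → ℝ) : ℝ :=
  ∑ j, ((if i = xI n j then 2 * w (yI n j) else 0) - if i = yI n j then 2 * w (xI n j) else 0)

theorem contactCoeff_tI (n : ℕ) (w : Fin (2 * n + 1) → ℝ) : contactCoeff n (tI n) w = 0 := by
  refine Finset.sum_eq_zero fun j _ => ?_
  have := j.2
  rw [if_neg, if_neg, sub_zero] <;> simp only [xI, yI, tI, Fin.ext_iff, Fin.val_last] <;> omega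

theorem contDiff_contactCoeff (n : ℕ) (i : Fin (2 * n + 1)) : ContDiff ℝ ∞ (contactCoeff n i) := by
  unfold contactCoeff
  refine ContDiff.sum fun j _ => ?_
  split_ifs <;> fun_prop

theorem fderiv_eq_contactForm_add {n : ℕ} (F : (Fin N → ℝ) → Fin (2 * n + 1) → ℝ)
    (p : Fin N → ℝ) : fderiv ℝ (fun q => F q (tI n)) p = contactForm n F p +
      ∑ i, contactCoeff n i (F p) • fderiv ℝ (fun q => F q i) p := by
  have : ∑ i, contactCoeff n i (F p) • fderiv ℝ (fun q => F q i) p =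
      ∑ j, ((2 * F p (yI n j)) • fderiv ℝ (fun q => F q (xI n j)) p -
        (2 * F p (xI n j)) • fderiv ℝ (fun q => F q (yI n j)) p) := by
    simp only [contactCoeff, Finset.sum_smul]
    rw [Finset.sum_comm]
    simp [sub_smul, Finset.sum_sub_distrib, ite_smul]
  rw [this, contactForm, Finset.smul_sum, add_assoc, ← Finset.sum_add_distrib,
    Finset.sum_eq_zero, add_zero]
  intro j _
  module

theorem fderiv_comp_eq_sum {d : ℕ} {G : (Fin d → ℝ) → ℝ} {F : (Fin N → ℝ) → Fin d → ℝ}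
    (hG : ContDiff ℝ ∞ G) (hF : ∀ i, ContDiff ℝ ∞ fun p => F p i) (p : Fin N → ℝ) :
    fderiv ℝ (fun q => G (F q)) p =
      ∑ i, fderiv ℝ G (F p) (Pi.single i 1) • fderiv ℝ (fun q => F q i) p := by
  have hF' : HasFDerivAt F (ContinuousLinearMap.pi fun i => fderiv ℝ (fun q => F q i) p) p :=
    hasFDerivAt_pi.mpr fun i => ((hF i).differentiable (by simp) p).hasFDerivAt
  have h := (((hG.differentiable (by simp) (F p)).hasFDerivAt).comp p hF').fderiv
  rw [show (fun q => G (F q)) = G ∘ F from rfl, h]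
  ext v
  rw [ContinuousLinearMap.comp_apply]
  conv_lhs => rw [pi_eq_sum_univ' (ContinuousLinearMap.pi (fun i => fderiv ℝ (fun q => F q i) p) v)]
  simp only [map_sum, map_smul]
  simp [mul_comm]

theorem continuous_contactForm {n : ℕ} {F : (Fin N → ℝ) → Fin (2 * n + 1) → ℝ}
    (hF : ∀ i, ContDiff ℝ ∞ fun p => F p i) : Continuous (contactForm n F) := by
  have h₁ : ∀ i, Continuous fun p => F p i := fun i => (hF i).continuous
  have h₂ : ∀ i, Continuous (fderiv ℝ fun p => F p i) := fun i =>
    (hF i).continuous_fderiv (by simp)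
  unfold contactForm
  fun_prop

theorem tendsto_integral_mul_covDet_fderiv {n : ℕ}
    {F : ℕ → (Fin (n + 1) → ℝ) → Fin (2 * n + 1) → ℝ}
    {G : Fin (n + 1) → (Fin (2 * n + 1) → ℝ) → ℝ} {χ : (Fin (n + 1) → ℝ) → ℝ}
    {S : Set (Fin (n + 1) → ℝ)} {K : Set (Fin (2 * n + 1) → ℝ)} {δ η : ℕ → ℝ}
    (hn : 1 ≤ n) (hF : ∀ k i, ContDiff ℝ ∞ fun p => F k p i) (hG : ∀ i, ContDiff ℝ ∞ (G i))
    (hχ : ContDiff ℝ ∞ χ) (hS : IsCompact S) (hχS : tsupport χ ⊆ S) (hK : IsCompact K)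
    (hFK : ∀ k, ∀ p ∈ S, F k p ∈ K) (hδ : ∀ k, 1 ≤ δ k)
    (hη : ∀ k, 0 ≤ η k) (hηδ : ∀ k, η k ≤ δ k)
    (hlim : Tendsto (fun k => δ k ^ n * η k) atTop (𝓝 0))
    (hdF : ∀ k, ∀ p ∈ S, ∀ i, ‖fderiv ℝ (fun q => F k q i) p‖ ≤ δ k)
    (hθ : ∀ k, ∀ p ∈ S, ‖contactForm n (F k) p‖ ≤ η k) :
    Tendsto (fun k => ∫ p, χ p *
      covDet (n + 1) fun i => fderiv ℝ (fun q => G i (F k q)) p) atTop (𝓝 0) := by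
  have hδ0 : ∀ k, 0 ≤ δ k := fun k => zero_le_one.trans (hδ k)
  have hFc : ∀ k, ContDiff ℝ ∞ (F k) := fun k => contDiff_pi.mpr (hF k)
  let b : Fin (n + 1) → Fin (2 * n + 1) → (Fin (2 * n + 1) → ℝ) → ℝ := fun i m w =>
    fderiv ℝ (G i) w (Pi.single m 1) + contactCoeff n m w * fderiv ℝ (G i) w (Pi.single (tI n) 1)
  let v : ℕ → Fin (2 * n + 1) → (Fin (n + 1) → ℝ) → (Fin (n + 1) → ℝ) →L[ℝ] ℝ := fun k m p =>
    if m = tI n then contactForm n (F k) p else fderiv ℝ (fun q => F k q m) p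
  have hb : ∀ i m, ContDiff ℝ ∞ (b i m) := by
    intro i m
    have h : ∀ w, ContDiff ℝ ∞ fun q => fderiv ℝ (G i) q w := fun w =>
      ((hG i).fderiv_right (m := ∞) (by simp)).clm_apply contDiff_const
    exact (h _).add ((contDiff_contactCoeff n m).mul (h _))
  have hv : ∀ k m, Continuous (v k m) := by
    intro k m
    by_cases hm : m = tI n
    · simpa only [v, if_pos hm] using continuous_contactForm (hF k)
    · simpa only [v, if_neg hm] using (hF k m).continuous_fderiv (by simp)
  have hvδ : ∀ k, ∀ p ∈ S, ∀ m, ‖v k m p‖ ≤ δ k := by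
    intro k p hp m
    by_cases hm : m = tI n
    · simpa only [v, if_pos hm] using (hθ k p hp).trans (hηδ k)
    · simpa only [v, if_neg hm] using hdF k p hp m
  have hexp : ∀ k i p, fderiv ℝ (fun q => G i (F k q)) p = ∑ m, b i m (F k p) • v k m p := by
    intro k i p
    have h₁ : ∀ m, fderiv ℝ (fun q => F k q m) p = v k m p + if m = tI n then
        ∑ l, contactCoeff n l (F k p) • fderiv ℝ (fun q => F k q l) p else 0 := by
      intro m
      by_cases hm : m = tI n
      · simp only [v, if_pos hm]
        rw [hm, fderiv_eq_contactForm_add]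
      · simp only [v, if_neg hm, add_zero]
    have h₂ : ∀ m, contactCoeff n m (F k p) • fderiv ℝ (fun q => F k q m) p =
        contactCoeff n m (F k p) • v k m p := by
      intro m
      by_cases hm : m = tI n
      · rw [hm, contactCoeff_tI, zero_smul, zero_smul]
      · simp only [v, if_neg hm]
    rw [fderiv_comp_eq_sum (hG i) (hF k)]
    conv_lhs =>
      enter [2, m]
      rw [h₁ m]
    simp only [smul_add, Finset.sum_add_distrib, smul_ite, smul_zero, Finset.sum_ite_eq',
      Finset.mem_univ, if_true, h₂, b, add_smul, Finset.smul_sum, smul_smul]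
    simp only [mul_comm]
  let H : (Fin (n + 1) → Fin (2 * n + 1)) → (Fin (2 * n + 1) → ℝ) → ℝ := fun κ w =>
    ∏ i, b i (κ i) w
  have hH : ∀ κ, ContDiff ℝ ∞ (H κ) := fun κ => contDiff_prod fun i _ => hb i (κ i)
  have ha : ∀ κ k, ContDiff ℝ ∞ fun p => χ p * H κ (F k p) := fun κ k =>
    hχ.mul ((hH κ).comp (hFc k))
  have hχc : HasCompactSupport χ := hS.of_isClosed_subset (isClosed_tsupport _) hχS
  have haS : ∀ κ k, tsupport (fun p => χ p * H κ (F k p)) ⊆ S := fun κ k =>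
    (closure_mono (Function.support_mul_subset_left _ _)).trans hχS
  have hsplit : ∀ k, ∫ p, χ p * covDet (n + 1) (fun i => fderiv ℝ (fun q => G i (F k q)) p) =
      ∑ κ : Fin (n + 1) → Fin (2 * n + 1),
        ∫ p, χ p * H κ (F k p) * covDet (n + 1) fun i => v k (κ i) p := by
    intro k
    rw [← integral_finsetSum]
    · congr 1
      ext p
      simp_rw [hexp]
      have := (covDet (n + 1)).toMultilinearMap.map_sum (fun i m => b i m (F k p) • v k m p)
      simp only [AlternatingMap.coe_multilinearMap] at this
      rw [this, Finset.mul_sum]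
      refine Finset.sum_congr rfl fun κ _ => ?_
      have := (covDet (n + 1)).toMultilinearMap.map_smul_univ (fun i => b i (κ i) (F k p))
        fun i => v k (κ i) p
      simp only [AlternatingMap.coe_multilinearMap] at this
      rw [this, smul_eq_mul, mul_assoc]
    · intro κ _
      refine Continuous.integrable_of_hasCompactSupport ((ha κ k).continuous.mul
        (continuous_covDet.comp (continuous_pi fun i => hv k (κ i)))) ?_
      exact hχc.mul_right.mul_right
  simp_rw [hsplit]
  rw [show (0 : ℝ) = ∑ κ : Fin (n + 1) → Fin (2 * n + 1), (0 : ℝ) by simp]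
  refine tendsto_finsetSum _ fun κ _ => ?_
  obtain ⟨A, hA⟩ := hS.exists_bound_of_continuousOn hχ.continuous.continuousOn
  obtain ⟨B, hB⟩ := hK.exists_bound_of_continuousOn (hH κ).continuous.continuousOn
  replace hA : ∀ p ∈ S, ‖χ p‖ ≤ |A| := fun p hp => (hA p hp).trans (le_abs_self A)
  replace hB : ∀ w ∈ K, ‖H κ w‖ ≤ |B| := fun w hw => (hB w hw).trans (le_abs_self B)
  by_cases hκ : ∀ i, κ i ≠ tI n
  · have hvκ : ∀ k p i, v k (κ i) p = fderiv ℝ (fun q => F k q (κ i)) p := fun k p i => if_neg (hκ i)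
    simp_rw [hvκ]
    obtain ⟨A', hA'⟩ := hS.exists_bound_of_continuousOn
      (hχ.continuous_fderiv (by simp)).continuousOn
    obtain ⟨B', hB'⟩ := hK.exists_bound_of_continuousOn
      ((hH κ).continuous_fderiv (by simp)).continuousOn
    replace hA' : ∀ p ∈ S, ‖fderiv ℝ χ p‖ ≤ |A'| := fun p hp =>
      (hA' p hp).trans (le_abs_self A')
    replace hB' : ∀ w ∈ K, ‖fderiv ℝ (H κ) w‖ ≤ |B'| := fun w hw =>
      (hB' w hw).trans (le_abs_self B')
    refine tendsto_integral_horizontal (a := fun k p => χ p * H κ (F k p))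
      (C := |A| * ∑ m : Fin (2 * n + 1), |B'| * ‖(Pi.single m 1 : Fin (2 * n + 1) → ℝ)‖ + |B| * |A'|)
      hn hF (ha κ) hS (haS κ) (by positivity) hδ0 hη hlim ?_ hdF hθ κ hκ
    intro k p hp
    have hFp := hFK k p hp
    have hHF : ContDiff ℝ ∞ fun q => H κ (F k q) := (hH κ).comp (hFc k)
    rw [fderiv_fun_mul (hχ.differentiable (by simp) p) (hHF.differentiable (by simp) p)]
    have hcomp : ‖fderiv ℝ (fun q => H κ (F k q)) p‖ ≤
        (∑ m : Fin (2 * n + 1), |B'| * ‖(Pi.single m 1 : Fin (2 * n + 1) → ℝ)‖) * δ k := by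
      rw [fderiv_comp_eq_sum (hH κ) (hF k), Finset.sum_mul]
      refine norm_sum_le_of_le _ fun m _ => ?_
      rw [norm_smul]
      refine mul_le_mul (((fderiv ℝ (H κ) (F k p)).le_opNorm _).trans ?_) (hdF k p hp m)
        (norm_nonneg _) (by positivity)
      gcongr
      exact hB' _ hFp
    refine (norm_add_le _ _).trans ?_
    rw [norm_smul, norm_smul, add_mul]
    refine add_le_add ?_ ?_
    · rw [mul_assoc]
      exact mul_le_mul (hA p hp) hcomp (norm_nonneg _) (abs_nonneg _)
    · refine (mul_le_mul (hB _ hFp) (hA' p hp) (norm_nonneg _) (abs_nonneg _)).trans ?_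
      exact le_mul_of_one_le_right (by positivity) (hδ k)
  · push Not at hκ
    obtain ⟨i₀, hi₀⟩ := hκ
    obtain ⟨D, hD, hdet⟩ := exists_abs_covDet_le (n + 1)
    refine tendsto_integral_zero_of_abs_le (β := fun k => |A| * |B| * D * (δ k ^ n * η k)) hS
      (by simpa using hlim.const_mul (|A| * |B| * D)) ?_ ?_
    · intro k p hp
      rw [image_eq_zero_of_notMem_tsupport fun h => hp (hχS h), zero_mul, zero_mul]
    · intro k p hp
      have hprod : ∏ i, ‖v k (κ i) p‖ ≤ δ k ^ n * η k := by
        rw [← Finset.prod_erase_mul _ _ (Finset.mem_univ i₀)]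
        refine mul_le_mul ?_ ?_ (norm_nonneg _) (pow_nonneg (hδ0 k) n)
        · have hcard : (Finset.univ.erase i₀).card = n := by simp
          calc _ ≤ ∏ _i ∈ Finset.univ.erase i₀, δ k :=
                Finset.prod_le_prod (fun _ _ => norm_nonneg _) fun i _ => hvδ k p hp (κ i)
            _ = _ := by rw [Finset.prod_const, hcard]
        · simpa only [v, if_pos hi₀] using hθ k p hp
      rw [abs_mul, abs_mul, mul_assoc (|A| * |B|)]
      have hAB : |χ p| * |H κ (F k p)| ≤ |A| * |B| :=
        mul_le_mul (hA p hp) (hB _ (hFK k p hp)) (abs_nonneg _) (abs_nonneg _)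
      refine mul_le_mul hAB ((hdet _).trans ?_) (abs_nonneg _) (by positivity)
      gcongr

end Asymptotics

section Mollification

open Filter
open scoped ContDiff

variable {N : ℕ}

theorem exists_smooth_approx {n : ℕ} {u : Fin (2 * n + 1) → C(Fin N → ℝ, ℝ)} {γ C : ℝ}
    (hγ : 0 < γ) (hC : 0 ≤ C)
    (hu : ∀ p ∈ closedBall (0 : Fin N → ℝ) 6, ∀ q ∈ closedBall (0 : Fin N → ℝ) 6, ∀ i,
      |u i q - u i p| ≤ C * dist q p ^ γ)
    (hτ : ∀ p ∈ closedBall (0 : Fin N → ℝ) 6, ∀ q ∈ closedBall (0 : Fin N → ℝ) 6,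
      |u (tI n) q - u (tI n) p + 2 * ∑ j, (u (xI n j) p * u (yI n j) q -
        u (xI n j) q * u (yI n j) p)| ≤ C * dist q p ^ (2 * γ)) :
    ∃ D : ℝ, 1 ≤ D ∧ ∀ ε : ℝ, 0 < ε → ε ≤ 1 → ∃ F : (Fin N → ℝ) → Fin (2 * n + 1) → ℝ,
      (∀ i, ContDiff ℝ ∞ fun p => F p i) ∧ ∀ p ∈ closedBall (0 : Fin N → ℝ) 5,
        (∀ i, |F p i - u i p| ≤ C * ε ^ γ) ∧
        (∀ i, ‖fderiv ℝ (fun q => F q i) p‖ ≤ D * ε ^ (γ - 1)) ∧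
        ‖contactForm n F p‖ ≤ D * ε ^ (2 * γ - 1) := by
  obtain ⟨B, hB, hT⟩ := exists_mollifier (Fin N → ℝ)
  have hD₁ : 0 ≤ B * C := by positivity
  have hD₂ : 0 ≤ 4 * n * (C * (B * C)) := by positivity
  refine ⟨1 + B * C + 4 * n * (C * (B * C)), by linarith, fun ε hε hε1 => ?_⟩
  obtain ⟨T, hT⟩ := hT ε hε
  refine ⟨fun p i => T (u i) p, fun i => (hT (u i)).1, fun p hp => ?_⟩
  have hball : ∀ q ∈ ball p ε, q ∈ closedBall (0 : Fin N → ℝ) 6 := by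
    intro q hq
    rw [mem_closedBall] at hp ⊢
    rw [mem_ball] at hq
    linarith [dist_triangle q p 0]
  have hp6 : p ∈ closedBall (0 : Fin N → ℝ) 6 := closedBall_subset_closedBall (by norm_num) hp
  have hpow : ∀ s : ℝ, 0 < s → ∀ q ∈ ball p ε, C * dist q p ^ s ≤ C * ε ^ s := fun s hs q hq => by
    gcongr
    exact (mem_ball.mp hq).le
  have hest : ∀ i, |T (u i) p - u i p| ≤ C * ε ^ γ ∧
      ‖fderiv ℝ (T (u i)) p‖ ≤ B * C * ε ^ (γ - 1) := by
    intro i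
    have := (hT (u i)).2 p (u i p) (C * ε ^ γ) (by positivity) fun q hq =>
      (hu p hp6 q (hball q hq) i).trans (hpow γ hγ q hq)
    refine ⟨this.1, this.2.trans_eq ?_⟩
    rw [Real.rpow_sub_one hε.ne']
    ring
  refine ⟨fun i => (hest i).1, fun i => (hest i).2.trans ?_, ?_⟩
  · gcongr
    linarith
  let τ : C(Fin N → ℝ, ℝ) := u (tI n) + (2 : ℝ) • ∑ j, (u (xI n j) p • u (yI n j) -
    u (yI n j) p • u (xI n j))
  have hτT : T τ = fun q => T (u (tI n)) q + (2 : ℝ) • ∑ j, (u (xI n j) p • T (u (yI n j)) q -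
    u (yI n j) p • T (u (xI n j)) q) := by
    ext q
    simp only [τ, map_add, map_smul, map_sum, map_sub, Pi.add_apply, Pi.smul_apply,
      Finset.sum_apply, Pi.sub_apply]
  have hdiff : ∀ i, HasFDerivAt (T (u i)) (fderiv ℝ (T (u i)) p) p := fun i =>
    ((hT (u i)).1.differentiable (by simp) p).hasFDerivAt
  have hτd : fderiv ℝ (T τ) p = fderiv ℝ (T (u (tI n))) p + (2 : ℝ) • ∑ j,
      (u (xI n j) p • fderiv ℝ (T (u (yI n j))) p -
        u (yI n j) p • fderiv ℝ (T (u (xI n j))) p) := by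
    rw [hτT]
    refine HasFDerivAt.fderiv ((hdiff _).fun_add (HasFDerivAt.fun_const_smul
      (HasFDerivAt.fun_sum fun j _ => ((hdiff _).fun_const_smul _).fun_sub
        ((hdiff _).fun_const_smul _)) _))
  have hτest : ‖fderiv ℝ (T τ) p‖ ≤ B * C * ε ^ (2 * γ - 1) := by
    have := (hT τ).2 p (u (tI n) p) (C * ε ^ (2 * γ)) (by positivity) fun q hq => by
      refine le_trans (le_of_eq ?_) ((hτ p hp6 q (hball q hq)).trans (hpow _ (by linarith) q hq))
      congr 1
      simp only [τ, ContinuousMap.add_apply, ContinuousMap.smul_apply, ContinuousMap.sub_apply,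
        ContinuousMap.sum_apply, smul_eq_mul]
      rw [add_sub_right_comm]
      congr 2
      exact Finset.sum_congr rfl fun j _ => by ring
    refine this.2.trans_eq ?_
    rw [Real.rpow_sub_one hε.ne']
    ring
  have hsub : contactForm n (fun p i => T (u i) p) p = fderiv ℝ (T τ) p + (2 : ℝ) • ∑ j,
      ((T (u (xI n j)) p - u (xI n j) p) • fderiv ℝ (T (u (yI n j))) p -
        (T (u (yI n j)) p - u (yI n j) p) • fderiv ℝ (T (u (xI n j))) p) := by
    rw [hτd, contactForm, add_assoc, ← smul_add, ← Finset.sum_add_distrib]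
    congr 2
    refine Finset.sum_congr rfl fun j _ => ?_
    module
  have hterm : ∀ i l, ‖(T (u i) p - u i p) • fderiv ℝ (T (u l)) p‖ ≤
      C * (B * C) * ε ^ (2 * γ - 1) := by
    intro i l
    rw [norm_smul]
    calc _ ≤ (C * ε ^ γ) * (B * C * ε ^ (γ - 1)) :=
          mul_le_mul (hest i).1 (hest l).2 (norm_nonneg _) (by positivity)
      _ = C * (B * C) * (ε ^ γ * ε ^ (γ - 1)) := by ring
      _ = _ := by
        rw [← Real.rpow_add hε]
        ring_nf
  have hsum : ‖∑ j, ((T (u (xI n j)) p - u (xI n j) p) • fderiv ℝ (T (u (yI n j))) p -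
        (T (u (yI n j)) p - u (yI n j) p) • fderiv ℝ (T (u (xI n j))) p)‖ ≤
      ∑ _j : Fin n, 2 * (C * (B * C) * ε ^ (2 * γ - 1)) :=
    norm_sum_le_of_le _ fun j _ => (norm_sub_le _ _).trans
      (by linarith [hterm (xI n j) (yI n j), hterm (yI n j) (xI n j)])
  rw [Finset.sum_const, Finset.card_univ, Fintype.card_fin, nsmul_eq_mul] at hsum
  rw [hsub]
  refine (norm_add_le _ _).trans ?_
  rw [norm_smul, Real.norm_eq_abs, abs_two]
  have : 0 < ε ^ (2 * γ - 1) := Real.rpow_pos_of_pos hε _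
  nlinarith

/-- A Hölder map of exponent more than `(n + 1) / (n + 2)` is not injective on the ball of
radius `5` of `ℝ^{n+1}`. -/
theorem not_injOn_of_holder {n : ℕ} {u : Fin (2 * n + 1) → C(Fin (n + 1) → ℝ, ℝ)} {γ C : ℝ}
    (hn : 1 ≤ n) (hγ : ((n : ℝ) + 1) / (n + 2) < γ) (hγ1 : γ ≤ 1) (hC : 0 ≤ C)
    (hu : ∀ p ∈ closedBall (0 : Fin (n + 1) → ℝ) 6, ∀ q ∈ closedBall (0 : Fin (n + 1) → ℝ) 6,
      ∀ i, |u i q - u i p| ≤ C * dist q p ^ γ)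
    (hτ : ∀ p ∈ closedBall (0 : Fin (n + 1) → ℝ) 6, ∀ q ∈ closedBall (0 : Fin (n + 1) → ℝ) 6,
      |u (tI n) q - u (tI n) p + 2 * ∑ j, (u (xI n j) p * u (yI n j) q -
        u (xI n j) q * u (yI n j) p)| ≤ C * dist q p ^ (2 * γ)) :
    ¬ InjOn (fun p i => u i p) (closedBall (0 : Fin (n + 1) → ℝ) 5) := by
  intro hinj
  have hγ0 : 0 < γ := lt_trans (by positivity) hγ
  have hexp : 0 < (n + 2) * γ - (n + 1) := by
    rw [div_lt_iff₀ (by positivity)] at hγ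
    linarith
  have hS : IsCompact (closedBall (0 : Fin (n + 1) → ℝ) 5) := isCompact_closedBall 0 5
  have hf : Continuous fun (p : Fin (n + 1) → ℝ) i => u i p :=
    continuous_pi fun i => (u i).continuous
  have hg : ∀ i : Fin (n + 1), ∃ g : (Fin (2 * n + 1) → ℝ) → ℝ, ContDiff ℝ ∞ g ∧
      ∀ x ∈ closedBall (0 : Fin (n + 1) → ℝ) 5, |g (fun i => u i x) - x i| < 1 / 2 := fun i =>
    exists_contDiff_near_of_injOn hf hS hinj (continuous_apply i) (by norm_num)
  choose g hg hgu using hg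
  obtain ⟨D, hD, hF⟩ := exists_smooth_approx hγ0 hC hu hτ
  let ε : ℕ → ℝ := fun k => 1 / ((k : ℝ) + 1)
  have hε : ∀ k, 0 < ε k := fun k => Nat.one_div_pos_of_nat
  have hε1 : ∀ k, ε k ≤ 1 := fun k => by
    simp only [ε]
    rw [div_le_one (by positivity)]
    linarith [(Nat.cast_nonneg k : (0 : ℝ) ≤ k)]
  have hεlim : Tendsto ε atTop (𝓝 0) := tendsto_one_div_add_atTop_nhds_zero_nat
  have hεpow : ∀ s : ℝ, 0 < s → Tendsto (fun k => ε k ^ s) atTop (𝓝 0) := fun s hs => by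
    have := hεlim.rpow_const (p := s) (Or.inr hs.le)
    rwa [Real.zero_rpow hs.ne'] at this
  choose F hFs hFe using fun k => hF (ε k) (hε k) (hε1 k)
  let K : Set (Fin (2 * n + 1) → ℝ) :=
    cthickening C ((fun p i => u i p) '' closedBall (0 : Fin (n + 1) → ℝ) 5)
  have hK : IsCompact K := (hS.image hf).cthickening
  have hdist : ∀ k, ∀ p ∈ closedBall (0 : Fin (n + 1) → ℝ) 5,
      dist (F k p) (fun i => u i p) ≤ C * ε k ^ γ := fun k p hp =>
    (dist_pi_le_iff (mul_nonneg hC (Real.rpow_nonneg (hε k).le _))).mpr (hFe k p hp).1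
  have hFK : ∀ k, ∀ p ∈ closedBall (0 : Fin (n + 1) → ℝ) 5, F k p ∈ K := fun k p hp =>
    mem_cthickening_of_dist_le _ _ _ _ (mem_image_of_mem _ hp)
      ((hdist k p hp).trans (mul_le_of_le_one_right hC
        (Real.rpow_le_one (hε k).le (hε1 k) hγ0.le)))
  have hfK : ∀ p ∈ closedBall (0 : Fin (n + 1) → ℝ) 5, (fun i => u i p) ∈ K := fun p hp =>
    self_subset_cthickening _ (mem_image_of_mem _ hp)
  obtain ⟨χ, hin, hout⟩ : ∃ χ : ContDiffBump (0 : Fin (n + 1) → ℝ), χ.rIn = 3 ∧ χ.rOut = 4 :=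
    ⟨⟨3, 4, by norm_num, by norm_num⟩, rfl, rfl⟩
  have hone : ∀ k, 1 ≤ ε k ^ (γ - 1) := fun k =>
    Real.one_le_rpow_of_pos_of_le_one_of_nonpos (hε k) (hε1 k) (by linarith)
  have hto0 := tendsto_integral_mul_covDet_fderiv (F := F) (χ := χ)
    (G := fun i w => Real.smoothTransition (g i w)) (δ := fun k => D * ε k ^ (γ - 1))
    (η := fun k => D * ε k ^ (2 * γ - 1)) hn hFs
    (fun i => Real.smoothTransition.contDiff.comp (hg i)) χ.contDiff hS
    (by
      rw [χ.tsupport_eq, hout]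
      exact closedBall_subset_closedBall (by norm_num)) hK hFK
    (fun k => one_le_mul_of_one_le_of_one_le hD (hone k))
    (fun k => mul_nonneg (by linarith) (Real.rpow_nonneg (hε k).le _))
    (fun k => mul_le_mul_of_nonneg_left
      (Real.rpow_le_rpow_of_exponent_ge (hε k) (hε1 k) (by linarith)) (by linarith))
    (by
      have : ∀ k, (D * ε k ^ (γ - 1)) ^ n * (D * ε k ^ (2 * γ - 1)) =
          D ^ (n + 1) * ε k ^ ((n + 2) * γ - (n + 1)) := by
        intro k
        rw [mul_pow, ← Real.rpow_natCast (ε k ^ (γ - 1)), ← Real.rpow_mul (hε k).le,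
          mul_mul_mul_comm, ← pow_succ, ← Real.rpow_add (hε k)]
        ring_nf
      simp_rw [this]
      simpa using (hεpow _ hexp).const_mul (D ^ (n + 1)))
    (fun k p hp => (hFe k p hp).2.1) (fun k p hp => (hFe k p hp).2.2)
  have hclose : ∀ᶠ k in atTop, ∀ x ∈ ball (0 : Fin (n + 1) → ℝ) 5, ∀ i,
      |g i (F k x) - x i| < 1 := by
    have huc : ∀ i, ∀ᶠ k in atTop, ∀ x ∈ ball (0 : Fin (n + 1) → ℝ) 5,
        |g i (F k x) - x i| < 1 := by
      intro i
      obtain ⟨ρ, hρ, h⟩ := Metric.uniformContinuousOn_iff.mp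
        (hK.uniformContinuousOn_of_continuous (hg i).continuous.continuousOn) (1 / 2) (by norm_num)
      have hsmall : Tendsto (fun k => C * ε k ^ γ) atTop (𝓝 0) := by
        simpa using (hεpow γ hγ0).const_mul C
      filter_upwards [hsmall.eventually (gt_mem_nhds hρ)] with k hk x hx
      have hx' := ball_subset_closedBall hx
      have h₁ := h _ (hFK k x hx') _ (hfK x hx') ((hdist k x hx').trans_lt hk)
      rw [Real.dist_eq] at h₁
      have h₂ := abs_sub_le (g i (F k x)) (g i fun i => u i x) (x i)
      linarith [hgu i x hx']
    filter_upwards [eventually_all.mpr huc] with k hk x hx i using hk i x hx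
  have hto1 := Tendsto.congr' (f₂ := fun _ => (1 : ℝ)) (by
    filter_upwards [hclose] with k hk
    exact integral_mul_covDet_fderiv_eq_one χ hin hout
      (fun i => (hg i).comp (contDiff_pi.mpr (hFs k))) hk) hto0
  exact one_ne_zero (tendsto_nhds_unique tendsto_const_nhds hto1)

end Mollification

section Koranyi

theorem dK_nonneg (n : ℕ) (p q : EuclideanSpace ℝ (Fin (2*n+1))) : 0 ≤ dK n p q :=
  Real.rpow_nonneg (by positivity) _

theorem dK_pow_four (n : ℕ) (p q : EuclideanSpace ℝ (Fin (2*n+1))) :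
    dK n p q ^ 4 = (∑ i : Fin (2*n), (p (Fin.castSucc i) - q (Fin.castSucc i)) ^ 2) ^ 2 +
    (p (tI n) - q (tI n) +
      2 * ∑ j : Fin n, (q (xI n j) * p (yI n j) - p (xI n j) * q (yI n j))) ^ 2 := by
  rw [dK, ← Real.rpow_natCast, ← Real.rpow_mul (by positivity)]
  norm_num

theorem abs_sub_le_dK {n : ℕ} (p q : EuclideanSpace ℝ (Fin (2*n+1))) {i : Fin (2*n+1)}
    (hi : i ≠ tI n) : |p i - q i| ≤ dK n p q := by
  obtain ⟨i, rfl⟩ : ∃ j, i = Fin.castSucc j := ⟨i.castPred hi, (Fin.castSucc_castPred i hi).symm⟩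
  refine le_of_sq_le_sq ?_ (dK_nonneg n p q)
  rw [sq_abs]
  refine (Finset.single_le_sum (f := fun i : Fin (2*n) => (p i.castSucc - q i.castSucc) ^ 2)
    (fun i _ => sq_nonneg _) (Finset.mem_univ i)).trans ?_
  refine le_of_sq_le_sq ?_ (sq_nonneg _)
  rw [← pow_mul, dK_pow_four]
  exact le_add_of_nonneg_right (sq_nonneg _)

theorem abs_contact_le_dK_sq {n : ℕ} (p q : EuclideanSpace ℝ (Fin (2*n+1))) :
    |p (tI n) - q (tI n) +
      2 * ∑ j : Fin n, (q (xI n j) * p (yI n j) - p (xI n j) * q (yI n j))| ≤ dK n p q ^ 2 := by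
  refine le_of_sq_le_sq ?_ (sq_nonneg _)
  rw [sq_abs, ← pow_mul, dK_pow_four]
  exact le_add_of_nonneg_left (sq_nonneg _)

theorem exists_injective_continuousLinearMap {k m : ℕ} (h : k ≤ m) :
    ∃ L : (Fin k → ℝ) →L[ℝ] EuclideanSpace ℝ (Fin m), Function.Injective L := by
  refine ⟨(EuclideanSpace.equiv (Fin m) ℝ).symm.toContinuousLinearMap.comp
    (ContinuousLinearMap.pi fun i => if hi : i.1 < k then
      ContinuousLinearMap.proj ⟨i.1, hi⟩ else 0), ?_⟩
  refine (EuclideanSpace.equiv (Fin m) ℝ).symm.injective.comp fun x y hxy => ?_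
  ext i
  have := congrFun hxy (i.castLE h)
  simpa using this

end Koranyi

/-- Gromov's non-embedding theorem.
Every topological embedding `f : ℝ^m → ℝ^{2n+1}`, `m ≥ n+1`, which is locally `γ`-Hölder
continuous as a map into the Heisenberg group `ℍ^n`, satisfies `γ ≤ (n+1)/(n+2)`. -/
theorem stmt1 (n m : ℕ) (hn : 1 ≤ n) (hm : n + 1 ≤ m) (γ : ℝ) (hγ0 : 0 < γ) (hγ1 : γ ≤ 1)
    (f : EuclideanSpace ℝ (Fin m) → EuclideanSpace ℝ (Fin (2*n+1)))
    (hemb : IsEmbedding f)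
    (hhold : ∀ K : Set (EuclideanSpace ℝ (Fin m)), IsCompact K →
      ∃ C : ℝ, ∀ x ∈ K, ∀ y ∈ K, dK n (f x) (f y) ≤ C * dist x y ^ γ) :
    γ ≤ ((n:ℝ)+1)/((n:ℝ)+2) := by
  by_contra! hγ
  obtain ⟨L, hL⟩ := exists_injective_continuousLinearMap hm
  have hcont : Continuous fun p => f (L p) := hemb.continuous.comp L.continuous
  let u : Fin (2 * n + 1) → C(Fin (n + 1) → ℝ, ℝ) := fun i =>
    ⟨fun p => f (L p) i, by fun_prop⟩
  have hS : IsCompact (closedBall (0 : Fin (n + 1) → ℝ) 6) := isCompact_closedBall 0 6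
  obtain ⟨C₀, hC₀⟩ := hhold _ (hS.image L.continuous)
  obtain ⟨R, hR⟩ := hS.exists_bound_of_continuousOn hcont.continuousOn
  have hR0 : 0 ≤ R := (norm_nonneg _).trans (hR 0 (by simp))
  have hfR : ∀ p ∈ closedBall (0 : Fin (n + 1) → ℝ) 6, ∀ i, |u i p| ≤ R := fun p hp i =>
    (PiLp.norm_apply_le (f (L p)) i).trans (hR p hp)
  let C : ℝ := |C₀| * ‖L‖ ^ γ
  have hC : 0 ≤ C := by positivity
  have hd : ∀ p ∈ closedBall (0 : Fin (n + 1) → ℝ) 6, ∀ q ∈ closedBall (0 : Fin (n + 1) → ℝ) 6,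
      dK n (f (L q)) (f (L p)) ≤ C * dist q p ^ γ := by
    intro p hp q hq
    refine (hC₀ _ (mem_image_of_mem L hq) _ (mem_image_of_mem L hp)).trans ?_
    rw [mul_assoc, ← Real.mul_rpow (norm_nonneg _) dist_nonneg]
    refine mul_le_mul (le_abs_self _) (Real.rpow_le_rpow dist_nonneg ?_ hγ0.le)
      (Real.rpow_nonneg dist_nonneg _) (abs_nonneg _)
    simpa using L.lipschitz.dist_le_mul q p
  have hτ : ∀ p ∈ closedBall (0 : Fin (n + 1) → ℝ) 6, ∀ q ∈ closedBall (0 : Fin (n + 1) → ℝ) 6,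
      |u (tI n) q - u (tI n) p + 2 * ∑ j, (u (xI n j) p * u (yI n j) q -
        u (xI n j) q * u (yI n j) p)| ≤ C ^ 2 * dist q p ^ (2 * γ) := by
    intro p hp q hq
    refine (abs_contact_le_dK_sq (f (L q)) (f (L p))).trans ?_
    refine (pow_le_pow_left₀ (dK_nonneg _ _ _) (hd p hp q hq) 2).trans_eq ?_
    rw [mul_pow, ← Real.rpow_natCast (dist q p ^ γ), ← Real.rpow_mul dist_nonneg, mul_comm γ]
    norm_num
  have hz : ∀ p ∈ closedBall (0 : Fin (n + 1) → ℝ) 6, ∀ q ∈ closedBall (0 : Fin (n + 1) → ℝ) 6,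
      ∀ i, i ≠ tI n → |u i q - u i p| ≤ C * dist q p ^ γ := fun p hp q hq i hi =>
    (abs_sub_le_dK _ _ hi).trans (hd p hp q hq)
  have hx : ∀ j, xI n j ≠ tI n := fun j h => by
    have := j.2
    simp only [xI, tI, Fin.ext_iff, Fin.val_last] at h
    omega
  have hy : ∀ j, yI n j ≠ tI n := fun j h => by
    have := j.2
    simp only [yI, tI, Fin.ext_iff, Fin.val_last] at h
    omega
  have ht : ∀ p ∈ closedBall (0 : Fin (n + 1) → ℝ) 6, ∀ q ∈ closedBall (0 : Fin (n + 1) → ℝ) 6,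
      |u (tI n) q - u (tI n) p| ≤ (C ^ 2 * 12 ^ γ + 4 * n * (R * C)) * dist q p ^ γ := by
    intro p hp q hq
    have hdist : dist q p ≤ 12 := by
      rw [mem_closedBall] at hp hq
      linarith [dist_triangle_right q p 0]
    have hsq : dist q p ^ (2 * γ) ≤ 12 ^ γ * dist q p ^ γ := by
      rw [two_mul, Real.rpow_add_of_nonneg dist_nonneg hγ0.le hγ0.le]
      gcongr
    have hsum : |∑ j, (u (xI n j) p * u (yI n j) q - u (xI n j) q * u (yI n j) p)| ≤
        ∑ _j : Fin n, 2 * (R * (C * dist q p ^ γ)) := by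
      refine (Finset.abs_sum_le_sum_abs _ _).trans (Finset.sum_le_sum fun j _ => ?_)
      have hsplit : u (xI n j) p * u (yI n j) q - u (xI n j) q * u (yI n j) p =
          u (xI n j) p * (u (yI n j) q - u (yI n j) p) -
            u (yI n j) p * (u (xI n j) q - u (xI n j) p) := by ring
      rw [hsplit]
      refine (abs_sub _ _).trans ?_
      rw [abs_mul, abs_mul, two_mul]
      exact add_le_add
        (mul_le_mul (hfR p hp _) (hz p hp q hq _ (hy j)) (abs_nonneg _) hR0)
        (mul_le_mul (hfR p hp _) (hz p hp q hq _ (hx j)) (abs_nonneg _) hR0)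
    rw [Finset.sum_const, Finset.card_univ, Fintype.card_fin, nsmul_eq_mul] at hsum
    have h₁ := (hτ p hp q hq).trans (mul_le_mul_of_nonneg_left hsq (sq_nonneg C))
    rw [abs_le] at h₁ hsum ⊢
    constructor <;> nlinarith
  let C' : ℝ := C + C ^ 2 + (C ^ 2 * 12 ^ γ + 4 * n * (R * C))
  have hC₁ : 0 ≤ C ^ 2 * 12 ^ γ + 4 * n * (R * C) := by positivity
  have hC₂ : 0 ≤ C ^ 2 := sq_nonneg C
  refine not_injOn_of_holder (u := u) (C := C') hn hγ hγ1 (by positivity) ?_ ?_ ?_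
  · intro p hp q hq i
    have hnn : 0 ≤ dist q p ^ γ := Real.rpow_nonneg dist_nonneg _
    by_cases hi : i = tI n
    · subst hi
      exact (ht p hp q hq).trans (mul_le_mul_of_nonneg_right (by simp only [C']; linarith) hnn)
    · exact (hz p hp q hq i hi).trans
        (mul_le_mul_of_nonneg_right (by simp only [C']; linarith) hnn)
  · intro p hp q hq
    exact (hτ p hp q hq).trans (mul_le_mul_of_nonneg_right (by simp only [C']; linarith)
      (Real.rpow_nonneg dist_nonneg _))
  · intro p _ q _ hpq
    exact hL (hemb.injective (PiLp.ext fun i => congrFun hpq i))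
end

section
/- Let n ≥ 1 and γ > 2n/(2n+1). There is no continuous injective map f : S^{2n} → ℝ^{2n+1} (S^{2n} the unit sphere in ℝ^{2n+1}) which is γ-Hölder continuous as a map into the Heisenberg group ℍ^n, i.e. such that d_K(f(x), f(y)) ≤ C·|x−y|^γ for some constant C and all x, y ∈ S^{2n}. -/
open Metric Set MeasureTheory Topology

section NoRetraction

variable {E : Type*} [NormedAddCommGroup E] [InnerProductSpace ℝ E] [FiniteDimensional ℝ E]

/-- `t ↦ det (1 + t A)` is a polynomial of degree at most the dimension. -/
lemma exists_polynomial_eval_eq_det (A : E →L[ℝ] E) :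
    ∃ p : Polynomial ℝ, p.natDegree ≤ Module.finrank ℝ E ∧
      ∀ t : ℝ, p.eval t = (ContinuousLinearMap.id ℝ E + t • A).det := by
  classical
  let b := Module.finBasis ℝ E
  let M := LinearMap.toMatrix b b (A : E →ₗ[ℝ] E)
  refine ⟨((Polynomial.X : Polynomial ℝ) • M.map Polynomial.C +
    (1 : Matrix (Fin (Module.finrank ℝ E)) (Fin (Module.finrank ℝ E)) ℝ).map Polynomial.C).det,
    ?_, fun t ↦ ?_⟩
  · simpa using Polynomial.natDegree_det_X_add_C_le M 1
  · have h1 : (ContinuousLinearMap.id ℝ E + t • A).det = (1 + t • M).det := by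
      rw [ContinuousLinearMap.det, ← LinearMap.det_toMatrix b]
      congr 1
      simp [M]
    rw [h1, ← Polynomial.coe_evalRingHom, RingHom.map_det]
    congr 1
    ext i j
    simp [Matrix.map_apply, Matrix.one_apply, add_comm]
    split_ifs <;> simp [mul_comm]

lemma det_fderiv_eq_zero_of_norm_const {r : E → E} {R : ℝ} (hR : 0 < R)
    (hr : Differentiable ℝ r) (hn : ∀ x, ‖r x‖ = R) (x : E) : (fderiv ℝ r x).det = 0 := by
  by_contra hdet
  let e := (fderiv ℝ r x).toContinuousLinearEquivOfDetNeZero hdet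
  have h1 : HasFDerivAt (fun y ↦ ‖r y‖ ^ 2) (2 • (innerSL ℝ (r x)).comp (fderiv ℝ r x)) x :=
    (hr x).hasFDerivAt.norm_sq
  have h2 : HasFDerivAt (fun y ↦ ‖r y‖ ^ 2) (0 : E →L[ℝ] ℝ) x := by
    simp_rw [hn]
    exact hasFDerivAt_const _ _
  have h3 := congrArg (fun L : E →L[ℝ] ℝ ↦ L (e.symm (r x))) (h1.unique h2)
  have h4 : fderiv ℝ r x (e.symm (r x)) = r x := e.apply_symm_apply (r x)
  simp only [smul_apply, ContinuousLinearMap.comp_apply, h4, innerSL_apply_apply,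
    real_inner_self_eq_norm_sq, hn, zero_apply] at h3
  simp at h3
  exact hR.ne' h3

variable [MeasurableSpace E] [BorelSpace E]

/-- If the integral of the Jacobian of `x ↦ x + t u(x)` over a bounded set is constant for
small `t`, it is constant for all `t`. -/
lemma setIntegral_det_eq_of_small {A : E → E →L[ℝ] E} (hA : Continuous A) {K : Set E}
    (hK : Bornology.IsBounded K) {V δ : ℝ} (hδ : 0 < δ)
    (h : ∀ t, 0 ≤ t → t < δ →
      ∫ x in K, (ContinuousLinearMap.id ℝ E + t • A x).det = V) (t : ℝ) :
    ∫ x in K, (ContinuousLinearMap.id ℝ E + t • A x).det = V := by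
  classical
  set d := Module.finrank ℝ E
  let s := Finset.range (d + 1)
  let v : ℕ → ℝ := fun i ↦ δ * (i / (d + 1))
  have hv : InjOn v s := by
    intro i _ j _ hij
    have h1 : (d + 1 : ℝ) ≠ 0 := by positivity
    simp only [v] at hij
    have := mul_left_cancel₀ hδ.ne' hij
    field_simp at this
    exact_mod_cast this
  have hv' : ∀ i ∈ s, 0 ≤ v i ∧ v i < δ := by
    intro i hi
    have hi' : (i : ℝ) < d + 1 := by exact_mod_cast Finset.mem_range.1 hi
    refine ⟨by positivity, ?_⟩
    have : (i : ℝ) / (d + 1) < 1 := (div_lt_one (by positivity)).2 hi'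
    simp only [v]
    nlinarith
  have key : ∀ x, (ContinuousLinearMap.id ℝ E + t • A x).det =
      ∑ i ∈ s, (ContinuousLinearMap.id ℝ E + v i • A x).det *
        (Lagrange.basis s v i).eval t := by
    intro x
    obtain ⟨p, hp, hpe⟩ := exists_polynomial_eval_eq_det (A x)
    have hdeg : p.degree < s.card := by
      refine (Polynomial.degree_le_natDegree).trans_lt ?_
      simp only [s, Finset.card_range]
      exact_mod_cast Nat.lt_succ_of_le hp
    have := Lagrange.eq_interpolate hv hdeg
    rw [Lagrange.interpolate_apply] at this
    rw [← hpe t, this, Polynomial.eval_finsetSum]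
    refine Finset.sum_congr rfl fun i _ ↦ ?_
    rw [Polynomial.eval_mul, Polynomial.eval_C, hpe]
  simp_rw [key]
  rw [integral_finsetSum]
  · simp_rw [integral_mul_const]
    rw [Finset.sum_congr rfl fun i hi ↦ by rw [h (v i) (hv' i hi).1 (hv' i hi).2],
      ← Finset.mul_sum, ← Polynomial.eval_finsetSum, Lagrange.sum_basis hv ⟨0, by simp [s]⟩]
    simp
  · intro i _
    have hc : Continuous fun x ↦ (ContinuousLinearMap.id ℝ E + v i • A x).det *
        (Lagrange.basis s v i).eval t :=
      (ContinuousLinearMap.continuous_det.comp (by fun_prop)).mul continuous_const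
    exact (hc.continuousOn.integrableOn_compact hK.isCompact_closure).mono_set subset_closure

/-- A continuously differentiable map of constant norm `R` cannot be the identity on the sphere of
radius `R`. -/
lemma not_exists_contDiff_retraction {r : E → E} {R : ℝ} (hR : 0 < R)
    (hr : ContDiff ℝ 1 r) (hn : ∀ x, ‖r x‖ = R) (hS : ∀ x, ‖x‖ = R → r x = x) : False := by
  let u : E → E := fun x ↦ r x - x
  have hu : ContDiff ℝ 1 u := hr.sub contDiff_id
  obtain ⟨C, hC⟩ := (hu.contDiffOn (s := closedBall (0 : E) R)).exists_lipschitzOnWith one_ne_zero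
    (convex_closedBall _ _) (isCompact_closedBall _ _)
  let A : E → E →L[ℝ] E := fderiv ℝ u
  have hA : Continuous A := hu.continuous_fderiv one_ne_zero
  have hdetc : Continuous fun z : ℝ × E ↦ (ContinuousLinearMap.id ℝ E + z.1 • A z.2).det :=
    ContinuousLinearMap.continuous_det.comp (by fun_prop)
  have hpos : ∀ᶠ t in 𝓝 (0 : ℝ), ∀ x ∈ closedBall (0 : E) R,
      0 < (ContinuousLinearMap.id ℝ E + t • A x).det := by
    refine (isCompact_closedBall (0 : E) R).eventually_forall_of_forall_eventually fun y _ ↦ ?_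
    refine hdetc.continuousAt.eventually (lt_mem_nhds ?_)
    simp [ContinuousLinearMap.det]
  obtain ⟨δ, hδ, hδpos⟩ := Metric.eventually_nhds_iff.1 hpos
  let δ' := min δ (min 1 (1 / (C + 1)))
  have hδ' : 0 < δ' := by positivity
  have hsmall : ∀ t, 0 ≤ t → t < δ' →
      ∫ x in ball (0 : E) R, (ContinuousLinearMap.id ℝ E + t • A x).det =
        volume.real (ball (0 : E) R) := by
    intro t ht0 ht
    have ht1 : t < 1 := ht.trans_le ((min_le_right _ _).trans (min_le_left _ _))
    have htC : t * C < 1 := by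
      have h1 : t < 1 / (C + 1) := ht.trans_le ((min_le_right _ _).trans (min_le_right _ _))
      have h2 := (lt_div_iff₀ (by positivity)).1 h1
      nlinarith
    have htpos : ∀ x ∈ closedBall (0 : E) R, 0 < (ContinuousLinearMap.id ℝ E + t • A x).det := by
      refine hδpos ?_
      rw [Real.dist_eq, sub_zero, abs_of_nonneg ht0]
      exact ht.trans_le (min_le_left _ _)
    let F : E → E := fun x ↦ x + t • u x
    have hF : ContDiff ℝ 1 F := contDiff_id.add (hu.const_smul t)
    have hF' : ∀ x, HasStrictFDerivAt F (ContinuousLinearMap.id ℝ E + t • A x) x := fun x ↦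
      (hasStrictFDerivAt_id x).add ((hu.contDiffAt.hasStrictFDerivAt one_ne_zero).const_smul t)
    have hinj : InjOn F (closedBall 0 R) := by
      intro x hx y hy hxy
      have h1 : x - y = t • (u y - u x) := by
        rw [smul_sub]
        have : x + t • u x = y + t • u y := hxy
        rw [sub_eq_sub_iff_add_eq_add, this, add_comm]
      have h2 : ‖x - y‖ ≤ t * (C * ‖x - y‖) := by
        conv_lhs => rw [h1, norm_smul, Real.norm_of_nonneg ht0]
        have := hC.dist_le_mul y hy x hx
        rw [dist_eq_norm, dist_comm, dist_eq_norm] at this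
        gcongr
      by_contra hne
      have h3 : 0 < ‖x - y‖ := norm_pos_iff.2 (sub_ne_zero.2 hne)
      nlinarith
    have hFeq : ∀ x, F x = (1 - t) • x + t • r x := by
      intro x
      simp only [F, u]
      module
    have hFball : F '' ball 0 R ⊆ ball 0 R := by
      rintro _ ⟨x, hx, rfl⟩
      rw [mem_ball_zero_iff] at hx ⊢
      rw [hFeq]
      calc ‖(1 - t) • x + t • r x‖ ≤ ‖(1 - t) • x‖ + ‖t • r x‖ := norm_add_le _ _
        _ = (1 - t) * ‖x‖ + t * R := by
          rw [norm_smul, norm_smul, Real.norm_of_nonneg ht0, Real.norm_of_nonneg (by linarith), hn]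
        _ < R := by nlinarith
    have hopen : IsOpen (F '' ball 0 R) := by
      rw [isOpen_iff_mem_nhds]
      rintro _ ⟨x, hx, rfl⟩
      have hd := htpos x (ball_subset_closedBall hx)
      let e := (ContinuousLinearMap.id ℝ E + t • A x).toContinuousLinearEquivOfDetNeZero hd.ne'
      have hm : Filter.map F (𝓝 x) = 𝓝 (F x) :=
        HasStrictFDerivAt.map_nhds_eq_of_equiv (f' := e) (hF' x)
      rw [← hm]
      exact Filter.image_mem_map (isOpen_ball.mem_nhds hx)
    have himage : F '' ball 0 R = ball 0 R := by
      refine hFball.antisymm ?_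
      refine (isPreconnected_ball (x := (0 : E)) (r := R)).subset_of_closure_inter_subset hopen
        ⟨F 0, hFball ⟨0, mem_ball_self hR, rfl⟩, ⟨0, mem_ball_self hR, rfl⟩⟩ ?_
      rintro y ⟨hy, hyb⟩
      have hcl : closure (F '' ball 0 R) ⊆ F '' closedBall 0 R :=
        closure_minimal (image_mono ball_subset_closedBall)
          ((isCompact_closedBall _ _).image hF.continuous).isClosed
      obtain ⟨x, hx, rfl⟩ := hcl hy
      refine ⟨x, ?_, rfl⟩
      rw [mem_closedBall_zero_iff] at hx
      rw [mem_ball_zero_iff]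
      refine hx.lt_of_ne fun hxR ↦ ?_
      rw [mem_ball_zero_iff, show F x = x by simp [F, u, hS x hxR]] at hyb
      exact hyb.ne hxR
    have hcv := integral_image_eq_integral_abs_det_fderiv_smul (F := ℝ) volume
      (measurableSet_ball (x := (0 : E)) (ε := R))
      (fun x _ ↦ (hF' x).hasFDerivAt.hasFDerivWithinAt)
      (hinj.mono ball_subset_closedBall) (fun _ ↦ 1)
    rw [himage] at hcv
    simp only [integral_const, MeasurableSet.univ, measureReal_restrict_apply, univ_inter,
      smul_eq_mul, mul_one] at hcv
    rw [hcv]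
    refine setIntegral_congr_fun measurableSet_ball fun x hx ↦ ?_
    exact (abs_of_pos (htpos x (ball_subset_closedBall hx))).symm
  have h1 := setIntegral_det_eq_of_small hA isBounded_ball hδ' hsmall 1
  have h2 : ∀ x, (ContinuousLinearMap.id ℝ E + (1 : ℝ) • A x).det = 0 := by
    intro x
    rw [one_smul, ← det_fderiv_eq_zero_of_norm_const hR (hr.differentiable one_ne_zero) hn x]
    congr 1
    simp only [A, u]
    rw [fderiv_fun_sub (hr.differentiable one_ne_zero x) differentiableAt_fun_id, fderiv_fun_id]
    abel
  simp_rw [h2] at h1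
  rw [integral_zero] at h1
  have h3 : 0 < volume.real (ball (0 : E) R) :=
    ENNReal.toReal_pos (measure_ball_pos _ _ hR).ne' measure_ball_lt_top.ne
  exact h3.ne h1

end NoRetraction

section Separation

variable {E : Type*} [NormedAddCommGroup E] [InnerProductSpace ℝ E]

lemma continuous_inv_max_one_norm_smul : Continuous fun x : E ↦ (max 1 ‖x‖)⁻¹ • x :=
  ((continuous_const.max continuous_norm).inv₀ fun x ↦
    (lt_of_lt_of_le one_pos (le_max_left 1 ‖x‖)).ne').smul continuous_id

lemma norm_inv_max_one_norm_smul_le (x : E) : ‖(max 1 ‖x‖)⁻¹ • x‖ ≤ 1 := by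
  have h1 : 0 < max 1 ‖x‖ := lt_of_lt_of_le one_pos (le_max_left _ _)
  rw [norm_smul, norm_inv, Real.norm_of_nonneg h1.le, inv_mul_le_one₀ h1]
  exact le_max_right _ _

variable [FiniteDimensional ℝ E]

/-- A homeomorphism supported in a given ball moving its centre to a given point of the ball. -/
lemma exists_homeomorph_of_mem_ball {x y : E} {ρ : ℝ} (hy : y ∈ ball x ρ) :
    ∃ ψ : E ≃ₜ E, (∀ z ∉ ball x ρ, ψ z = z) ∧ ψ x = y := by
  have hρ : 0 < ρ := pos_of_mem_ball hy
  rw [mem_ball, dist_eq_norm] at hy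
  let F : E → E := fun z ↦ z + max 0 (1 - ‖z - x‖ / ρ) • (y - x)
  let c : NNReal := ⟨‖y - x‖ / ρ, by positivity⟩
  have hc : c < 1 := by
    rw [← NNReal.coe_lt_coe]
    exact (div_lt_one hρ).2 hy
  have hF : ApproximatesLinearOn F (ContinuousLinearEquiv.refl ℝ E : E →L[ℝ] E) univ c := by
    intro a _ b _
    have h1 : F a - F b - (ContinuousLinearEquiv.refl ℝ E : E →L[ℝ] E) (a - b) =
        (max 0 (1 - ‖a - x‖ / ρ) - max 0 (1 - ‖b - x‖ / ρ)) • (y - x) := by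
      simp only [F, ContinuousLinearEquiv.coe_coe, ContinuousLinearEquiv.refl_apply]
      module
    rw [h1, norm_smul, Real.norm_eq_abs]
    have h2 : |max 0 (1 - ‖a - x‖ / ρ) - max 0 (1 - ‖b - x‖ / ρ)| ≤ ‖a - b‖ / ρ := by
      refine (abs_max_sub_max_le_max 0 _ 0 _).trans ?_
      rw [sub_self, abs_zero, max_eq_right (abs_nonneg _)]
      have h3 : (1 - ‖a - x‖ / ρ) - (1 - ‖b - x‖ / ρ) = (‖b - x‖ - ‖a - x‖) / ρ := by ring
      rw [h3, abs_div, abs_of_pos hρ]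
      gcongr
      have := abs_norm_sub_norm_le (b - x) (a - x)
      rwa [sub_sub_sub_cancel_right, norm_sub_rev b a] at this
    calc _ ≤ ‖a - b‖ / ρ * ‖y - x‖ := by gcongr
      _ = (‖y - x‖ / ρ) * ‖a - b‖ := by ring
  have hN : Subsingleton E ∨
      c < ‖((ContinuousLinearEquiv.refl ℝ E).symm : E →L[ℝ] E)‖₊⁻¹ := by
    rcases subsingleton_or_nontrivial E with h | h
    · exact Or.inl h
    · right
      have : ‖((ContinuousLinearEquiv.refl ℝ E).symm : E →L[ℝ] E)‖₊ = 1 := by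
        rw [← NNReal.coe_inj]
        exact ContinuousLinearMap.norm_id
      rwa [this, inv_one]
  refine ⟨hF.toHomeomorph F hN, fun z hz ↦ ?_, ?_⟩
  · change F z = z
    rw [mem_ball, dist_eq_norm, not_lt] at hz
    have : 1 - ‖z - x‖ / ρ ≤ 0 := by
      rw [sub_nonpos, one_le_div hρ]
      exact hz
    simp [F, max_eq_left this]
  · change F x = y
    simp [F]

/-- The homeomorphisms supported in a connected open set act transitively on it. -/
lemma IsPreconnected.exists_homeomorph_apply_eq {V : Set E} (hV : IsPreconnected V)
    (hVo : IsOpen V) {p q : E} (hp : p ∈ V) (hq : q ∈ V) :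
    ∃ ψ : E ≃ₜ E, (∀ z ∉ V, ψ z = z) ∧ ψ p = q := by
  refine hV.induction₂ (fun p q ↦ ∃ ψ : E ≃ₜ E, (∀ z ∉ V, ψ z = z) ∧ ψ p = q) ?_ ?_ ?_ hp hq
  · intro x hx
    obtain ⟨ρ, hρ, hb⟩ := Metric.isOpen_iff.1 hVo x hx
    filter_upwards [mem_nhdsWithin_of_mem_nhds (ball_mem_nhds x hρ)] with y hy
    obtain ⟨ψ, h1, h2⟩ := exists_homeomorph_of_mem_ball hy
    exact ⟨ψ, fun z hz ↦ h1 z fun h ↦ hz (hb h), h2⟩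
  · rintro x y z - - - ⟨ψ, h1, h2⟩ ⟨ψ', h1', h2'⟩
    refine ⟨ψ.trans ψ', fun w hw ↦ ?_, ?_⟩
    · simp [h1 w hw, h1' w hw]
    · simp [h2, h2']
  · rintro x y - - ⟨ψ, h1, h2⟩
    refine ⟨ψ.symm, fun w hw ↦ ?_, ?_⟩
    · rw [ψ.symm_apply_eq, h1 w hw]
    · rw [ψ.symm_apply_eq, h2]

/-- A finite set off `K` can be moved out of any bounded set by a homeomorphism fixing `K`, if `K`
together with any finite set does not separate the space. -/
lemma exists_homeomorph_forall_notMem [Nontrivial E] {K D : Set E} (hK : IsCompact K)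
    (hconn : ∀ F : Set E, F.Finite → IsPreconnected (K ∪ F)ᶜ) (hD : Bornology.IsBounded D)
    {Z : Set E} (hZ : Z.Finite) (hZK : Disjoint Z K) :
    ∃ ψ : E ≃ₜ E, (∀ z ∈ K, ψ z = z) ∧ ∀ z ∈ Z, ψ z ∉ D := by
  induction Z, hZ using Set.Finite.induction_on with
  | empty => exact ⟨Homeomorph.refl E, by simp, by simp⟩
  | @insert p Z hpZ hZ ih =>
    rw [disjoint_insert_left] at hZK
    obtain ⟨ψ, h1, h2⟩ := ih hZK.2
    have hfin : (ψ '' Z).Finite := hZ.image ψ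
    obtain ⟨q, hq⟩ : ∃ q, q ∉ D ∪ (K ∪ ψ '' Z) := by
      by_contra! h
      have hb : Bornology.IsBounded (D ∪ (K ∪ ψ '' Z)) :=
        hD.union (hK.isBounded.union hfin.isBounded)
      rw [eq_univ_of_forall h] at hb
      exact NormedSpace.unbounded_univ ℝ E hb
    simp only [mem_union, not_or] at hq
    have hp : ψ p ∈ (K ∪ ψ '' Z)ᶜ := by
      rintro (h | ⟨z, hz, hzp⟩)
      · have := ψ.injective (h1 _ h)
        exact hZK.1 (this ▸ h)
      · exact hpZ (ψ.injective hzp ▸ hz)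
    obtain ⟨ψ', h1', h2'⟩ := (hconn _ hfin).exists_homeomorph_apply_eq
      (hK.isClosed.union hfin.isClosed).isOpen_compl hp (q := q) (by simpa using hq.2)
    refine ⟨ψ.trans ψ', fun z hz ↦ ?_, ?_⟩
    · rw [Homeomorph.trans_apply, h1 z hz]
      exact h1' z (by simp [hz])
    · rintro z (rfl | hz)
      · rw [Homeomorph.trans_apply, h2']
        exact hq.1
      · rw [Homeomorph.trans_apply, h1' (ψ z) (by simp [hz])]
        exact h2 z hz

variable [MeasurableSpace E] [BorelSpace E]

/-- A nowhere vanishing continuous map cannot be close to the identity on the unit sphere. -/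
lemma not_exists_continuous_ne_zero {F : E → E} (hF : Continuous F) (h0 : ∀ x, F x ≠ 0)
    (hS : ∀ x, ‖x‖ = 1 → ‖F x - x‖ ≤ 1 / 2) : False := by
  let a : E → ℝ := fun x ↦ max 0 (min 1 (‖x‖ - 1))
  have ha : Continuous a := by fun_prop
  let G : E → E := fun x ↦ (1 - a x) • F ((max 1 ‖x‖)⁻¹ • x) + a x • x
  have hG : Continuous G :=
    ((continuous_const.sub ha).smul (hF.comp continuous_inv_max_one_norm_smul)).add
      (ha.smul continuous_id)
  have hGout : ∀ x, 2 < ‖x‖ → G x = x := by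
    intro x hx
    have : a x = 1 := by
      simp only [a]
      rw [min_eq_left (by linarith), max_eq_right zero_le_one]
    simp [G, this]
  have hG0 : ∀ x, G x ≠ 0 := by
    intro x
    rcases le_or_gt ‖x‖ 1 with hx | hx
    · have : a x = 0 := by
        simp only [a]
        rw [min_eq_right (by linarith), max_eq_left (by linarith)]
      simpa [G, this, max_eq_left hx] using h0 x
    · have hx0 : 0 < ‖x‖ := by linarith
      have ha0 : 0 ≤ a x := le_max_left _ _
      have ha1 : a x ≤ 1 := max_le zero_le_one (min_le_left _ _)
      set y : E := ‖x‖⁻¹ • x with hy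
      have hy1 : ‖y‖ = 1 := by
        rw [hy, norm_smul, norm_inv, norm_norm, inv_mul_cancel₀ hx0.ne']
      have hGx : G x = (1 - a x) • F y + a x • x := by
        simp only [G, max_eq_right hx.le, hy]
      have hxy : inner ℝ x y = ‖x‖ := by
        rw [hy, real_inner_smul_right, real_inner_self_eq_norm_sq]
        field_simp
      have hFy : 1 / 2 ≤ inner ℝ (F y) y := by
        have h1 : inner ℝ (F y) y = inner ℝ (F y - y) y + 1 := by
          rw [inner_sub_left, real_inner_self_eq_norm_sq, hy1]
          ring
        have h2 := abs_real_inner_le_norm (F y - y) y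
        rw [hy1, mul_one] at h2
        have h3 := (abs_le.1 (h2.trans (hS y hy1))).1
        linarith
      intro h
      have h4 : inner ℝ (G x) y = 0 := by rw [h, inner_zero_left]
      rw [hGx, inner_add_left, real_inner_smul_left, real_inner_smul_left, hxy] at h4
      nlinarith
  have hcl : IsClosed {x : E | 3 ≤ ‖x‖} := isClosed_le continuous_const continuous_norm
  have hop : IsOpen {x : E | 2 < ‖x‖} := isOpen_lt continuous_const continuous_norm
  obtain ⟨g, hg, hgG, hgS, -⟩ := hG.exists_contDiff_approx_and_eqOn 1 hG.norm
    (fun x ↦ norm_pos_iff.2 (hG0 x)) hcl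
    (hop.mem_nhdsSet.2 fun x (hx : 3 ≤ ‖x‖) ↦ show 2 < ‖x‖ by linarith)
    (contDiff_id.contDiffOn.congr fun x hx ↦ hGout x hx)
  have hg0 : ∀ x, g x ≠ 0 := by
    intro x hx
    have := hgG x
    rw [hx, dist_zero_left] at this
    exact lt_irrefl _ this
  refine not_exists_contDiff_retraction (r := fun x ↦ (3 / ‖g x‖) • g x) (R := 3) (by norm_num)
    ((contDiff_const.div (hg.norm ℝ hg0) fun x ↦ norm_ne_zero_iff.2 (hg0 x)).smul hg) ?_ ?_
  · intro x
    have := norm_pos_iff.2 (hg0 x)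
    rw [norm_smul, norm_div, norm_norm, div_mul_cancel₀ _ this.ne']
    norm_num
  · intro x hx
    have : g x = x := (hgS (show 3 ≤ ‖x‖ from hx.ge)).trans (hGout x (by linarith))
    simp [this, hx]

/-- A continuous map bounded away from zero outside a compact set is uniformly close to a continuous
map with finitely many zeros. -/
lemma exists_continuous_finite_zeros {G : E → E} (hG : Continuous G) {R : ℝ}
    (hR : ∀ x, R ≤ ‖x‖ → 1 ≤ ‖G x‖) :
    ∃ h : E → E, Continuous h ∧ (∀ x, ‖h x - G x‖ ≤ 1 / 2) ∧ {x | h x = 0}.Finite := by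
  obtain ⟨g, hg, hgG, -⟩ := hG.exists_contDiff_approx 1
    (continuous_const (y := (1 / 4 : ℝ))) (fun _ ↦ by norm_num)
  have hgd : Differentiable ℝ g := hg.differentiable one_ne_zero
  have hnull := addHaar_image_eq_zero_of_det_fderivWithin_eq_zero (volume : Measure E)
    (s := {x | (fderiv ℝ g x).det = 0}) (f := g) (f' := fderiv ℝ g)
    (fun x _ ↦ (hgd x).hasFDerivAt.hasFDerivWithinAt) (fun x hx ↦ hx)
  obtain ⟨c, hc, hcr⟩ : ∃ c ∈ ball (0 : E) (1 / 4), c ∉ g '' {x | (fderiv ℝ g x).det = 0} := by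
    by_contra! h
    exact (measure_ball_pos volume (0 : E) (by norm_num : (0 : ℝ) < 1 / 4)).ne'
      (measure_mono_null h hnull)
  rw [mem_ball_zero_iff] at hc
  have hclose : ∀ x, ‖g x - c - G x‖ ≤ 1 / 2 := by
    intro x
    have h1 := hgG x
    rw [dist_eq_norm] at h1
    calc ‖g x - c - G x‖ = ‖(g x - G x) - c‖ := by congr 1; abel
      _ ≤ ‖g x - G x‖ + ‖c‖ := norm_sub_le _ _
      _ ≤ 1 / 2 := by linarith
  have hcont : Continuous fun x ↦ g x - c := hg.continuous.sub continuous_const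
  refine ⟨fun x ↦ g x - c, hcont, hclose, ?_⟩
  by_contra hinf
  have hsub : {x | g x - c = 0} ⊆ closedBall (0 : E) R := by
    intro x hx
    rw [mem_closedBall_zero_iff]
    by_contra! hxR
    have h1 := hR x hxR.le
    have h2 := hclose x
    rw [show g x - c = 0 from hx, zero_sub, norm_neg] at h2
    linarith
  have hclosed : IsClosed {x | g x - c = 0} := isClosed_eq hcont continuous_const
  obtain ⟨x, -, hx⟩ := Set.Infinite.exists_accPt_of_subset_isCompact hinf
    (isCompact_closedBall (0 : E) R) hsub
  have hxZ : g x = c := sub_eq_zero.1 (isClosed_iff_clusterPt.1 hclosed x hx.clusterPt)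
  have hdet : (fderiv ℝ g x).det ≠ 0 := fun h ↦ hcr ⟨x, h, hxZ⟩
  have hne : ∀ᶠ z in 𝓝[≠] x, g z ≠ c := (hgd x).hasFDerivAt.eventually_ne
    ⟨_, ((fderiv ℝ g x).toContinuousLinearEquivOfDetNeZero hdet).antilipschitz⟩
  rw [accPt_iff_frequently_nhdsNE] at hx
  exact hx (hne.mono fun z hz h ↦ hz (sub_eq_zero.1 h))

/-- The range of a continuous injective map from the unit sphere separates the space, possibly after
adding a finite set. -/
lemma exists_finite_not_isPreconnected_compl [Nontrivial E] {f : sphere (0 : E) 1 → E}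
    (hf : Continuous f) (hinj : Function.Injective f) :
    ∃ F : Set E, F.Finite ∧ ¬ IsPreconnected (range f ∪ F)ᶜ := by
  by_contra! hconn
  have hT : TietzeExtension E := TietzeExtension.of_tvs ℝ
  have hK : IsCompact (range f) := isCompact_range hf
  obtain ⟨G₀, hG₀⟩ := ContinuousMap.exists_extension (hf.isClosedEmbedding hinj)
    (⟨Subtype.val, continuous_subtype_val⟩ : C(sphere (0 : E) 1, E))
  obtain ⟨φ₀, hφ₀⟩ := ContinuousMap.exists_extension
    (isClosed_sphere (x := (0 : E)) (ε := 1)).isClosedEmbedding_subtypeVal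
    (⟨f, hf⟩ : C(sphere (0 : E) 1, E))
  have hG₀f : ∀ x, G₀ (f x) = x := fun x ↦ DFunLike.congr_fun hG₀ x
  have hφ₀f : ∀ x : sphere (0 : E) 1, φ₀ x = f x := fun x ↦ DFunLike.congr_fun hφ₀ x
  obtain ⟨R, hR⟩ := hK.isBounded.subset_closedBall (0 : E)
  obtain ⟨e, he⟩ := exists_norm_eq E zero_le_one
  let b : E → ℝ := fun x ↦ max 0 (min 1 (‖x‖ - R))
  have hb : Continuous b := by fun_prop
  let G : E → E := fun x ↦ (1 - b x) • G₀ x + b x • e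
  have hG : Continuous G :=
    ((continuous_const.sub hb).smul G₀.continuous).add (hb.smul continuous_const)
  have hGf : ∀ x, G (f x) = x := by
    intro x
    have h1 : ‖f x‖ ≤ R := by simpa using hR ⟨x, rfl⟩
    have h2 : b (f x) = 0 := by
      simp only [b]
      rw [min_eq_right (by linarith), max_eq_left (by linarith)]
    simp [G, h2, hG₀f]
  have hGout : ∀ x, R + 1 ≤ ‖x‖ → 1 ≤ ‖G x‖ := by
    intro x hx
    have h2 : b x = 1 := by
      simp only [b]
      rw [min_eq_left (by linarith), max_eq_right zero_le_one]
    simp [G, h2, he]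
  obtain ⟨h, hh, hhG, hfin⟩ := exists_continuous_finite_zeros hG hGout
  have hclose : ∀ x : sphere (0 : E) 1, ‖h (f x) - x‖ ≤ 1 / 2 := fun x ↦ by
    simpa [hGf] using hhG (f x)
  have hdisj : Disjoint {x | h x = 0} (range f) := by
    rw [Set.disjoint_right]
    rintro _ ⟨x, rfl⟩ (hx : h (f x) = 0)
    have h1 := hclose x
    rw [hx, zero_sub, norm_neg, norm_eq_of_mem_sphere x] at h1
    norm_num at h1
  have hD : IsCompact (φ₀ '' closedBall (0 : E) 1) :=
    (isCompact_closedBall _ _).image φ₀.continuous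
  obtain ⟨ψ, hψK, hψ⟩ := exists_homeomorph_forall_notMem hK hconn hD.isBounded hfin hdisj
  refine not_exists_continuous_ne_zero (F := fun x ↦ h (ψ.symm (φ₀ ((max 1 ‖x‖)⁻¹ • x))))
    (hh.comp (ψ.symm.continuous.comp (φ₀.continuous.comp continuous_inv_max_one_norm_smul))) ?_ ?_
  · intro x hx
    refine hψ _ hx ?_
    rw [ψ.apply_symm_apply]
    exact ⟨_, mem_closedBall_zero_iff.2 (norm_inv_max_one_norm_smul_le x), rfl⟩
  · intro x hx
    have h1 := hφ₀f ⟨x, mem_sphere_zero_iff_norm.2 hx⟩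
    have h2 := hclose ⟨x, mem_sphere_zero_iff_norm.2 hx⟩
    have h3 : ψ.symm (φ₀ x) = φ₀ x := by
      rw [ψ.symm_apply_eq, hψK]
      exact ⟨_, h1.symm⟩
    simp only [hx, max_self, inv_one, one_smul]
    rw [h3, h1]
    exact h2

end Separation

section SphereCover

variable {E : Type*} [NormedAddCommGroup E] [NormedSpace ℝ E] [FiniteDimensional ℝ E]
  [MeasurableSpace E] [BorelSpace E]

lemma card_mul_pow_le_of_pairwise_le_dist [Nontrivial E] (μ : Measure E) [μ.IsAddHaarMeasure]
    {δ : ℝ} (hδ : 0 < δ) (hδ1 : δ ≤ 1) (s : Finset (sphere (0 : E) 1))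
    (hs : ∀ x ∈ s, ∀ y ∈ s, x ≠ y → δ ≤ dist x y) :
    s.card * δ ^ (Module.finrank ℝ E - 1) ≤
      2 ^ Module.finrank ℝ E * (Module.finrank ℝ E * 2 ^ (Module.finrank ℝ E - 1)) := by
  set N := Module.finrank ℝ E with hN
  have hN0 : N ≠ 0 := Module.finrank_pos.ne'
  set v := μ.real (ball (0 : E) 1)
  have hv : 0 < v := ENNReal.toReal_pos (measure_ball_pos _ _ one_pos).ne' measure_ball_lt_top.ne
  have hball : ∀ (x : E) (r : ℝ), 0 ≤ r → μ.real (ball x r) = r ^ N * v := by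
    intro x r hr
    simp only [Measure.real, v, Measure.addHaar_ball μ x hr, ENNReal.toReal_mul,
      ENNReal.toReal_ofReal (pow_nonneg hr _), hN]
  have hdisj : (s : Set (sphere (0 : E) 1)).PairwiseDisjoint
      fun c ↦ ball (c : E) (δ / 2) := by
    intro x hx y hy hxy
    refine ball_disjoint_ball ?_
    have := hs x hx y hy hxy
    rw [Subtype.dist_eq] at this
    linarith
  have h1 : μ.real (⋃ c ∈ s, ball (c : E) (δ / 2)) = s.card * ((δ / 2) ^ N * v) := by
    rw [measureReal_biUnion_finset hdisj (fun _ _ ↦ measurableSet_ball)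
      (fun _ _ ↦ measure_ball_lt_top.ne)]
    simp [hball _ _ (by positivity : 0 ≤ δ / 2)]
  have hdisj2 : Disjoint (⋃ c ∈ s, ball (c : E) (δ / 2)) (ball (0 : E) (1 - δ / 2)) := by
    rw [disjoint_iUnion₂_left]
    intro c _
    refine ball_disjoint_ball ?_
    rw [dist_zero_right, norm_eq_of_mem_sphere]
    linarith
  have hsub : (⋃ c ∈ s, ball (c : E) (δ / 2)) ∪ ball (0 : E) (1 - δ / 2) ⊆
      ball (0 : E) (1 + δ / 2) := by
    refine union_subset (iUnion₂_subset fun c _ ↦ ball_subset_ball' ?_) (ball_subset_ball ?_)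
    · rw [dist_zero_right, norm_eq_of_mem_sphere]
      linarith
    · linarith
  have h2 := measureReal_mono (μ := μ) hsub measure_ball_lt_top.ne
  rw [measureReal_union hdisj2 measurableSet_ball
    ((measure_mono (subset_union_left.trans hsub)).trans_lt measure_ball_lt_top).ne
    measure_ball_lt_top.ne, h1, hball _ _ (by linarith), hball _ _ (by linarith),
    ← mul_assoc, ← add_mul] at h2
  have h3 := le_of_mul_le_mul_right h2 hv
  have h4 := (le_abs_self _).trans (abs_pow_sub_pow_le (1 + δ / 2) (1 - δ / 2) N)
  have h5 : |1 + δ / 2 - (1 - δ / 2)| = δ := by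
    rw [show 1 + δ / 2 - (1 - δ / 2) = δ by ring, abs_of_pos hδ]
  have h6 : max |1 + δ / 2| |1 - δ / 2| ≤ 2 := by
    refine max_le ?_ ?_ <;> rw [abs_le] <;> constructor <;> linarith
  have h7 : max |1 + δ / 2| |1 - δ / 2| ^ (N - 1) ≤ 2 ^ (N - 1) :=
    pow_le_pow_left₀ (le_max_of_le_left (abs_nonneg _)) h6 _
  rw [h5] at h4
  have h8 : s.card * (δ / 2) ^ N ≤ δ * (N * 2 ^ (N - 1)) := by
    have : δ * N * max |1 + δ / 2| |1 - δ / 2| ^ (N - 1) ≤ δ * N * 2 ^ (N - 1) := by gcongr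
    linarith
  have h9 : (δ / 2) ^ N = δ * (δ ^ (N - 1) / 2 ^ N) := by
    rw [div_pow, ← mul_div_assoc, ← pow_succ', Nat.sub_add_cancel (Nat.pos_of_ne_zero hN0)]
  rw [h9, mul_left_comm] at h8
  have h10 := le_of_mul_le_mul_left h8 hδ
  rw [← mul_div_assoc, div_le_iff₀ (by positivity)] at h10
  linarith

variable (E) in
/-- The unit sphere is covered by `O(δ^{1 - dim E})` balls of radius `δ`. -/
lemma exists_finset_sphere_cover [Nontrivial E] :
    ∃ C : ℝ, 0 < C ∧ ∀ δ : ℝ, 0 < δ → δ ≤ 1 → ∃ s : Finset (sphere (0 : E) 1),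
      (∀ x, ∃ c ∈ s, dist x c < δ) ∧ s.card * δ ^ (Module.finrank ℝ E - 1) ≤ C := by
  classical
  refine ⟨2 ^ Module.finrank ℝ E * (Module.finrank ℝ E * 2 ^ (Module.finrank ℝ E - 1)), ?_,
    fun δ hδ hδ1 ↦ ?_⟩
  · have : 0 < Module.finrank ℝ E := Module.finrank_pos
    positivity
  set B := 2 ^ Module.finrank ℝ E * (Module.finrank ℝ E * 2 ^ (Module.finrank ℝ E - 1) : ℝ)
  let P : Set ℕ := {k | ∃ s : Finset (sphere (0 : E) 1),
    (∀ x ∈ s, ∀ y ∈ s, x ≠ y → δ ≤ dist x y) ∧ s.card = k}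
  have hP : P.Nonempty := ⟨0, ∅, by simp, by simp⟩
  have hb : BddAbove P := by
    refine ⟨⌈B / δ ^ (Module.finrank ℝ E - 1)⌉₊, ?_⟩
    rintro _ ⟨s, hs, rfl⟩
    have h := card_mul_pow_le_of_pairwise_le_dist (Measure.addHaar (G := E)) hδ hδ1 s hs
    have h' := (le_div_iff₀ (by positivity)).2 h
    exact (Nat.cast_le (α := ℝ)).1 (h'.trans (Nat.le_ceil _))
  obtain ⟨s, hs, hcard⟩ := Nat.sSup_mem hP hb
  refine ⟨s, fun x ↦ ?_, card_mul_pow_le_of_pairwise_le_dist Measure.addHaar hδ hδ1 s hs⟩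
  by_contra! hx
  have hxs : x ∉ s := fun h ↦ by
    have := hx x h
    rw [dist_self] at this
    linarith
  have hmem : s.card + 1 ∈ P := by
    refine ⟨insert x s, ?_, Finset.card_insert_of_notMem hxs⟩
    intro y hy z hz hyz
    rw [Finset.mem_insert] at hy hz
    rcases hy with rfl | hy <;> rcases hz with rfl | hz
    · exact absurd rfl hyz
    · exact hx z hz
    · rw [dist_comm]
      exact hx y hy
    · exact hs y hy z hz hyz
  have := le_csSup hb hmem
  omega

end SphereCover

/-- The image of a Hölder map of large exponent, together with a finite set, is covered by few
Korányi balls. -/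
lemma exists_finset_forall_dK_le {n : ℕ} {γ : ℝ} (hγ : 2 * (n : ℝ) / (2 * (n : ℝ) + 1) < γ)
    {f : sphere (0 : EuclideanSpace ℝ (Fin (2 * n + 1))) 1 → EuclideanSpace ℝ (Fin (2 * n + 1))}
    {C : ℝ} (hf : ∀ x y, dK n (f x) (f y) ≤ C * dist x y ^ γ)
    {F : Set (EuclideanSpace ℝ (Fin (2 * n + 1)))} (hF : F.Finite) {ε : ℝ} (hε : 0 < ε) :
    ∀ᶠ m : ℕ in Filter.atTop, ∃ P : Finset (EuclideanSpace ℝ (Fin (2 * n + 1))),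
      (∀ k ∈ range f ∪ F, ∃ c ∈ P, dK n k c ≤ 1 / m) ∧ P.card ≤ ε * (m : ℝ) ^ (2 * n + 1) := by
  classical
  obtain ⟨B, hB, hcov⟩ := exists_finset_sphere_cover (EuclideanSpace ℝ (Fin (2 * n + 1)))
  simp only [finrank_euclideanSpace, Fintype.card_fin, Nat.add_sub_cancel] at hcov
  have hγ0 : 0 < γ := lt_of_le_of_lt (by positivity) hγ
  set D := max C 1
  have hD : 0 < D := lt_of_lt_of_le one_pos (le_max_right _ _)
  set θ : ℝ := 2 * n / γ
  have hθ : 0 < (2 * n + 1) - θ := by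
    rw [div_lt_iff₀ (by positivity)] at hγ
    rw [sub_pos, div_lt_iff₀ hγ0]
    linarith
  have hlim1 : Filter.Tendsto (fun m : ℕ ↦ B * D ^ θ * (m : ℝ) ^ (-((2 * n + 1) - θ)))
      Filter.atTop (𝓝 0) := by
    have := ((tendsto_rpow_neg_atTop hθ).comp tendsto_natCast_atTop_atTop).const_mul (B * D ^ θ)
    simpa using this
  have hlim2 : Filter.Tendsto (fun m : ℕ ↦ (hF.toFinset.card : ℝ) * ((m : ℝ) ^ (2 * n + 1))⁻¹)
      Filter.atTop (𝓝 0) := by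
    have h1 : Filter.Tendsto (fun x : ℝ ↦ x ^ (2 * n + 1)) Filter.atTop Filter.atTop :=
      Filter.tendsto_pow_atTop (by omega)
    have := ((h1.comp tendsto_natCast_atTop_atTop).inv_tendsto_atTop).const_mul
      (hF.toFinset.card : ℝ)
    simpa using this
  filter_upwards [hlim1.eventually (gt_mem_nhds (half_pos hε)),
    hlim2.eventually (gt_mem_nhds (half_pos hε)), Filter.eventually_ge_atTop 1] with m hm1 hm2 hm
  have hm0 : (0 : ℝ) < m := by exact_mod_cast hm
  have hm1' : (1 : ℝ) ≤ m := by exact_mod_cast hm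
  have hDm : 1 ≤ D * m := by nlinarith [le_max_right C 1]
  have hDm0 : 0 < D * m := by positivity
  set δ : ℝ := (D * m) ^ (-(1 / γ))
  have hδ : 0 < δ := Real.rpow_pos_of_pos hDm0 _
  have hδ1 : δ ≤ 1 := Real.rpow_le_one_of_one_le_of_nonpos hDm (by simp [hγ0.le])
  have hδγ : δ ^ γ = (D * m)⁻¹ := by
    rw [← Real.rpow_mul hDm0.le, neg_mul, one_div_mul_cancel hγ0.ne', Real.rpow_neg_one]
  have hδn : δ ^ (2 * n) = (D ^ θ * (m : ℝ) ^ θ)⁻¹ := by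
    rw [← Real.rpow_natCast, ← Real.rpow_mul hDm0.le, ← Real.mul_rpow hD.le hm0.le,
      ← Real.rpow_neg hDm0.le]
    congr 1
    push_cast
    simp only [θ]
    ring
  obtain ⟨s, hs, hcard⟩ := hcov δ hδ hδ1
  refine ⟨s.image f ∪ hF.toFinset, ?_, ?_⟩
  · rintro k (⟨x, rfl⟩ | hk)
    · obtain ⟨c, hc, hxc⟩ := hs x
      refine ⟨f c, by simp only [Finset.mem_union, Finset.mem_image]; exact Or.inl ⟨c, hc, rfl⟩, ?_⟩
      calc dK n (f x) (f c) ≤ C * dist x c ^ γ := hf x c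
        _ ≤ D * δ ^ γ := by
          gcongr
          exact le_max_left _ _
        _ = 1 / m := by
          rw [hδγ]
          field_simp
    · refine ⟨k, by simp [hk], ?_⟩
      have : dK n k k = 0 := by
        simp [dK, mul_comm]
      rw [this]
      positivity
  · have h1 : ((s.image f ∪ hF.toFinset).card : ℝ) ≤ s.card + hF.toFinset.card := by
      exact_mod_cast (Finset.card_union_le _ _).trans (Nat.add_le_add_right Finset.card_image_le _)
    have h2 : (s.card : ℝ) ≤ B * D ^ θ * (m : ℝ) ^ θ := by
      rw [hδn, mul_inv_le_iff₀ (by positivity)] at hcard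
      linarith
    have h3 : (m : ℝ) ^ θ = (m : ℝ) ^ (-((2 * n + 1) - θ)) * (m : ℝ) ^ (2 * n + 1) := by
      rw [← Real.rpow_natCast _ (2 * n + 1), ← Real.rpow_add hm0]
      congr 1
      push_cast
      ring
    have hp : (0 : ℝ) < (m : ℝ) ^ (2 * n + 1) := by positivity
    rw [← div_eq_mul_inv, div_lt_iff₀ hp] at hm2
    rw [h3, ← mul_assoc] at h2
    nlinarith

section Heisenberg

variable {n : ℕ}

lemma xI_ne_tI (j : Fin n) : xI n j ≠ tI n := by
  have := j.2
  simp only [xI, tI, ne_eq, Fin.ext_iff, Fin.val_last]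
  omega

lemma yI_ne_tI (j : Fin n) : yI n j ≠ tI n := by
  have := j.2
  simp only [yI, tI, ne_eq, Fin.ext_iff, Fin.val_last]
  omega

variable (n) in
/-- The alternating form in the group law of `ℍ^n`. -/
noncomputable def heisForm : EuclideanSpace ℝ (Fin (2 * n + 1)) →ₗ[ℝ]
    EuclideanSpace ℝ (Fin (2 * n + 1)) →ₗ[ℝ] ℝ :=
  LinearMap.mk₂ ℝ
    (fun p q ↦ 2 * ∑ j : Fin n, (q (xI n j) * p (yI n j) - p (xI n j) * q (yI n j)))
    (fun p p' q ↦ by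
      rw [← mul_add, ← Finset.sum_add_distrib]
      congr 1
      refine Finset.sum_congr rfl fun j _ ↦ ?_
      simp only [PiLp.add_apply]
      ring)
    (fun a p q ↦ by
      rw [smul_eq_mul, mul_left_comm, Finset.mul_sum _ _ a]
      congr 1
      refine Finset.sum_congr rfl fun j _ ↦ ?_
      simp only [PiLp.smul_apply, smul_eq_mul]
      ring)
    (fun p q q' ↦ by
      rw [← mul_add, ← Finset.sum_add_distrib]
      congr 1
      refine Finset.sum_congr rfl fun j _ ↦ ?_
      simp only [PiLp.add_apply]
      ring)
    (fun a p q ↦ by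
      rw [smul_eq_mul, mul_left_comm, Finset.mul_sum _ _ a]
      congr 1
      refine Finset.sum_congr rfl fun j _ ↦ ?_
      simp only [PiLp.smul_apply, smul_eq_mul]
      ring)

lemma heisForm_apply (p q : EuclideanSpace ℝ (Fin (2 * n + 1))) :
    heisForm n p q = 2 * ∑ j : Fin n, (q (xI n j) * p (yI n j) - p (xI n j) * q (yI n j)) :=
  rfl

lemma heisForm_swap (p q : EuclideanSpace ℝ (Fin (2 * n + 1))) :
    heisForm n p q = -heisForm n q p := by
  rw [heisForm_apply, heisForm_apply, ← mul_neg, ← Finset.sum_neg_distrib]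
  congr 1
  refine Finset.sum_congr rfl fun j _ ↦ ?_
  ring

@[simp]
lemma heisForm_self (p : EuclideanSpace ℝ (Fin (2 * n + 1))) : heisForm n p p = 0 := by
  have := heisForm_swap p p
  linarith

variable (n) in
/-- The central direction of `ℍ^n`. -/
noncomputable def heisCenter : EuclideanSpace ℝ (Fin (2 * n + 1)) :=
  EuclideanSpace.single (tI n) 1

@[simp]
lemma heisCenter_tI : heisCenter n (tI n) = 1 := by simp [heisCenter]

lemma heisCenter_of_ne {i : Fin (2 * n + 1)} (hi : i ≠ tI n) : heisCenter n i = 0 := by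
  simp [heisCenter, hi]

@[simp]
lemma heisForm_heisCenter (p : EuclideanSpace ℝ (Fin (2 * n + 1))) :
    heisForm n p (heisCenter n) = 0 := by
  simp [heisForm_apply, heisCenter_of_ne (xI_ne_tI _), heisCenter_of_ne (yI_ne_tI _)]

@[simp]
lemma heisForm_heisCenter_left (p : EuclideanSpace ℝ (Fin (2 * n + 1))) :
    heisForm n (heisCenter n) p = 0 := by
  rw [heisForm_swap, heisForm_heisCenter, neg_zero]

/-- The group law of `ℍ^n`. -/
noncomputable def heisMul (p w : EuclideanSpace ℝ (Fin (2 * n + 1))) :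
    EuclideanSpace ℝ (Fin (2 * n + 1)) :=
  p + w + heisForm n p w • heisCenter n

lemma heisMul_assoc (p w v : EuclideanSpace ℝ (Fin (2 * n + 1))) :
    heisMul (heisMul p w) v = heisMul p (heisMul w v) := by
  simp only [heisMul, map_add, map_smul, LinearMap.add_apply, LinearMap.smul_apply,
    heisForm_heisCenter, heisForm_heisCenter_left, smul_zero, add_zero]
  module

/-- The left quotient `p⁻¹ q` in `ℍ^n`. -/
lemma heisMul_sub_add (p q : EuclideanSpace ℝ (Fin (2 * n + 1))) :
    heisMul p (q - p + heisForm n q p • heisCenter n) = q := by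
  simp only [heisMul, map_add, map_sub, map_smul, heisForm_heisCenter, heisForm_self,
    heisForm_swap p q, smul_zero, add_zero, sub_zero]
  module

lemma heisMul_heisMul_neg (p w : EuclideanSpace ℝ (Fin (2 * n + 1))) :
    heisMul (heisMul p w) (-w) = p := by
  simp only [heisMul, map_add, map_neg, map_smul, LinearMap.add_apply, LinearMap.smul_apply,
    heisForm_heisCenter_left, heisForm_self, smul_zero, add_zero]
  module

lemma continuous_heisMul :
    Continuous fun x : EuclideanSpace ℝ (Fin (2 * n + 1)) × EuclideanSpace ℝ (Fin (2 * n + 1)) ↦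
      heisMul x.1 x.2 := by
  simp only [heisMul, heisForm_apply]
  fun_prop

lemma volume_preimage_heisMul (w : EuclideanSpace ℝ (Fin (2 * n + 1)))
    (S : Set (EuclideanSpace ℝ (Fin (2 * n + 1)))) :
    volume ((fun p ↦ heisMul p w) ⁻¹' S) = volume S := by
  have hdet : LinearMap.det (LinearMap.transvection ((heisForm n).flip w) (heisCenter n)) = 1 := by
    simp [LinearMap.transvection.det]
  have h : (fun p ↦ heisMul p w) ⁻¹' S =
      LinearMap.transvection ((heisForm n).flip w) (heisCenter n) ⁻¹' ((fun p ↦ p + w) ⁻¹' S) := by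
    ext p
    simp only [mem_preimage, LinearMap.transvection.apply, heisMul, LinearMap.flip_apply,
      add_right_comm]
  rw [h, Measure.addHaar_preimage_linearMap _ (by simp [hdet]), hdet, measure_preimage_add_right]
  simp

lemma volume_image_heisMul (c : EuclideanSpace ℝ (Fin (2 * n + 1)))
    (S : Set (EuclideanSpace ℝ (Fin (2 * n + 1)))) :
    volume (heisMul c '' S) = volume S := by
  have hdet : LinearMap.det (LinearMap.transvection (heisForm n c) (heisCenter n)) = 1 := by
    simp [LinearMap.transvection.det]
  have h : heisMul c '' S =
      (fun p ↦ c + p) '' (LinearMap.transvection (heisForm n c) (heisCenter n) '' S) := by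
    rw [image_image]
    refine image_congr fun x _ ↦ ?_
    simp only [LinearMap.transvection.apply, heisMul, add_assoc]
  rw [h, image_add_left, measure_preimage_add, Measure.addHaar_image_linearMap, hdet]
  simp

variable (n) in
/-- An anisotropic box of homogeneous radius `r` around the origin. -/
def heisBox (r : ℝ) : Set (EuclideanSpace ℝ (Fin (2 * n + 1))) :=
  {b | (∀ i : Fin (2 * n), |b (Fin.castSucc i)| ≤ r) ∧ |b (tI n)| ≤ r ^ 2}

lemma volume_heisBox {r : ℝ} (hr : 0 ≤ r) :
    volume (heisBox n r) = ENNReal.ofReal (2 ^ (2 * n + 1) * r ^ (2 * n + 2)) := by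
  set a : Fin (2 * n + 1) → ℝ := Fin.snoc (fun _ : Fin (2 * n) ↦ r) (r ^ 2)
  have h : heisBox n r = (WithLp.ofLp : EuclideanSpace ℝ (Fin (2 * n + 1)) → _) ⁻¹'
      Icc (-a) a := by
    ext b
    simp only [heisBox, mem_ofPred_eq, mem_preimage, mem_Icc, Pi.le_def,
      Fin.forall_fin_succ', a, Pi.neg_apply, Fin.snoc_castSucc, Fin.snoc_last, tI, abs_le,
      forall_and]
    tauto
  rw [h, (PiLp.volume_preserving_ofLp _).measure_preimage measurableSet_Icc.nullMeasurableSet,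
    Real.volume_Icc_pi, Fin.prod_univ_castSucc]
  simp only [a, Pi.neg_apply, Fin.snoc_castSucc, Fin.snoc_last, Finset.prod_const,
    Finset.card_univ, Fintype.card_fin]
  rw [← ENNReal.ofReal_pow (by linarith), ← ENNReal.ofReal_mul (pow_nonneg (by linarith) _)]
  congr 1
  ring

lemma exists_mem_heisBox_of_dK_le {p c : EuclideanSpace ℝ (Fin (2 * n + 1))} {r : ℝ}
    (hr : 0 ≤ r) (h : dK n p c ≤ r) : ∃ b ∈ heisBox n r, heisMul c b = p := by
  refine ⟨p - c + heisForm n p c • heisCenter n, ?_, heisMul_sub_add c p⟩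
  set Z := ∑ i : Fin (2 * n), (p (Fin.castSucc i) - c (Fin.castSucc i)) ^ 2 with hZ
  set T := p (tI n) - c (tI n) + heisForm n p c with hT
  have hZ0 : 0 ≤ Z := Finset.sum_nonneg fun _ _ ↦ sq_nonneg _
  have h4 : Z ^ 2 + T ^ 2 ≤ r ^ 4 := by
    have h' : (Z ^ 2 + T ^ 2) ^ ((1 : ℝ) / 4) ≤ r := h
    have h'' := pow_le_pow_left₀ (by positivity) h' 4
    rwa [← Real.rpow_natCast, ← Real.rpow_mul (by positivity), Nat.cast_ofNat,
      one_div_mul_cancel (by norm_num), Real.rpow_one] at h''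
  have hZr : Z ≤ r ^ 2 := by
    refine le_of_sq_le_sq ?_ (by positivity)
    nlinarith [sq_nonneg T]
  constructor
  · intro i
    have hi : heisCenter n i.castSucc = 0 := heisCenter_of_ne (Fin.castSucc_lt_last i).ne
    simp only [PiLp.add_apply, PiLp.sub_apply, PiLp.smul_apply, hi, smul_zero, add_zero]
    refine abs_le_of_sq_le_sq ?_ hr
    refine le_trans ?_ hZr
    exact Finset.single_le_sum (f := fun i : Fin (2 * n) ↦
      (p (Fin.castSucc i) - c (Fin.castSucc i)) ^ 2) (fun _ _ ↦ sq_nonneg _) (Finset.mem_univ i)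
  · simp only [PiLp.add_apply, PiLp.sub_apply, PiLp.smul_apply, heisCenter_tI, smul_eq_mul,
      mul_one]
    refine abs_le_of_sq_le_sq ?_ (by positivity)
    nlinarith [sq_nonneg Z]

lemma abs_apply_le_of_ne_tI {b : EuclideanSpace ℝ (Fin (2 * n + 1))} {r : ℝ}
    (hb : ∀ i : Fin (2 * n), |b (Fin.castSucc i)| ≤ r) {i : Fin (2 * n + 1)} (hi : i ≠ tI n) :
    |b i| ≤ r := by
  obtain ⟨k, rfl⟩ := Fin.exists_castSucc_eq.2 hi
  exact hb k

lemma heisMul_smul_mem_heisBox {b w : EuclideanSpace ℝ (Fin (2 * n + 1))} {r W s : ℝ}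
    (hr : 0 ≤ r) (hW : 0 ≤ W) (hb : b ∈ heisBox n r)
    (hw : ∀ i : Fin (2 * n), |w (Fin.castSucc i)| ≤ W) (hwt : w (tI n) = 0)
    (hs : |s| ≤ r) :
    heisMul b (s • w) ∈ heisBox n ((1 + W + 4 * n * W) * r) := by
  have hn : 0 ≤ 4 * n * W := by positivity
  constructor
  · intro i
    have hi : heisCenter n i.castSucc = 0 := heisCenter_of_ne (Fin.castSucc_lt_last i).ne
    simp only [heisMul, PiLp.add_apply, PiLp.smul_apply, hi, smul_eq_mul, mul_zero,
      add_zero]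
    have h1 := hb.1 i
    have h2 : |s * w i.castSucc| ≤ r * W := by
      rw [abs_mul]
      gcongr
      exact hw i
    have h3 := abs_add_le (b i.castSucc) (s * w i.castSucc)
    nlinarith [mul_nonneg hn hr]
  · simp only [heisMul, PiLp.add_apply, PiLp.smul_apply, heisCenter_tI, hwt, smul_eq_mul,
      mul_zero, add_zero, mul_one, map_smul]
    have h1 := hb.2
    have h2 : |heisForm n b w| ≤ 4 * n * W * r := by
      have : |∑ j : Fin n, (w (xI n j) * b (yI n j) - b (xI n j) * w (yI n j))| ≤
          ∑ _j : Fin n, 2 * (W * r) := by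
        refine (Finset.abs_sum_le_sum_abs _ _).trans (Finset.sum_le_sum fun j _ ↦ ?_)
        have h3 : |w (xI n j) * b (yI n j)| ≤ W * r := by
          rw [abs_mul]
          exact mul_le_mul (abs_apply_le_of_ne_tI hw (xI_ne_tI j))
            (abs_apply_le_of_ne_tI hb.1 (yI_ne_tI j)) (abs_nonneg _) hW
        have h4 : |b (xI n j) * w (yI n j)| ≤ r * W := by
          rw [abs_mul]
          exact mul_le_mul (abs_apply_le_of_ne_tI hb.1 (xI_ne_tI j))
            (abs_apply_le_of_ne_tI hw (yI_ne_tI j)) (abs_nonneg _) hr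
        have h5 := abs_sub (w (xI n j) * b (yI n j)) (b (xI n j) * w (yI n j))
        linarith
      rw [heisForm_apply, abs_mul, abs_two]
      simp only [Finset.sum_const, Finset.card_univ, Fintype.card_fin, nsmul_eq_mul] at this
      linarith
    have h3 : |s * heisForm n b w| ≤ r * (4 * n * W * r) := by
      rw [abs_mul]
      gcongr
    have h4 := abs_add_le (b (tI n)) (s * heisForm n b w)
    have h5 : 1 + 4 * n * W ≤ (1 + W + 4 * n * W) ^ 2 := by nlinarith
    have h6 := mul_le_mul_of_nonneg_right h5 (sq_nonneg r)
    rw [mul_pow]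
    linarith

end Heisenberg

section Connectivity

variable {n : ℕ}

/-- The points of `A` which right translation by `w` moves out of `A`. -/
def heisExit (A : Set (EuclideanSpace ℝ (Fin (2 * n + 1))))
    (w : EuclideanSpace ℝ (Fin (2 * n + 1))) : Set (EuclideanSpace ℝ (Fin (2 * n + 1))) :=
  {p | p ∈ A ∧ heisMul p w ∉ A}

variable {A : Set (EuclideanSpace ℝ (Fin (2 * n + 1)))}

lemma volume_heisExit_heisMul_le (w v : EuclideanSpace ℝ (Fin (2 * n + 1))) :
    volume (heisExit A (heisMul w v)) ≤ volume (heisExit A w) + volume (heisExit A v) := by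
  have h : heisExit A (heisMul w v) ⊆
      heisExit A w ∪ (fun p ↦ heisMul p w) ⁻¹' heisExit A v := by
    rintro p ⟨hp, hpA⟩
    rw [← heisMul_assoc] at hpA
    by_cases h : heisMul p w ∈ A
    · exact Or.inr ⟨h, hpA⟩
    · exact Or.inl ⟨hp, h⟩
  refine (measure_mono h).trans ((measure_union_le _ _).trans ?_)
  rw [volume_preimage_heisMul]

lemma volume_heisExit_nsmul_le (w : EuclideanSpace ℝ (Fin (2 * n + 1))) (m : ℕ) :
    volume (heisExit A ((m : ℝ) • w)) ≤ m * volume (heisExit A w) := by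
  induction m with
  | zero =>
    have : heisExit A (((0 : ℕ) : ℝ) • w) = ∅ := by
      ext p
      simp [heisExit, heisMul]
    rw [this]
    simp
  | succ m ih =>
    have : ((m + 1 : ℕ) : ℝ) • w = heisMul ((m : ℝ) • w) w := by
      simp [heisMul, add_smul]
    rw [this]
    refine (volume_heisExit_heisMul_le _ _).trans ?_
    rw [Nat.cast_succ, add_mul, one_mul]
    gcongr

/-- A point which leaves `A` along a horizontal segment meets `K` on the way, if `A` is a union of
components of the complement of `K`. -/
lemma exists_heisMul_smul_mem {K u v : Set (EuclideanSpace ℝ (Fin (2 * n + 1)))}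
    (hu : IsOpen u) (hv : IsOpen v) (hKuv : Kᶜ ⊆ u ∪ v) (hdisj : Kᶜ ∩ (u ∩ v) = ∅)
    {p w : EuclideanSpace ℝ (Fin (2 * n + 1))} (hp : p ∈ heisExit (Kᶜ ∩ u) w) :
    ∃ s ∈ Icc (0 : ℝ) 1, heisMul p (s • w) ∈ K := by
  by_contra! h
  set g : ℝ → EuclideanSpace ℝ (Fin (2 * n + 1)) := fun s ↦ heisMul p (s • w)
  have hg : Continuous g :=
    continuous_heisMul.comp (continuous_const.prodMk (continuous_id.smul continuous_const))
  have hpre : IsPreconnected (g '' Icc 0 1) := isPreconnected_Icc.image g hg.continuousOn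
  have hsub : g '' Icc 0 1 ⊆ Kᶜ := by
    rintro _ ⟨s, hs, rfl⟩
    exact h s hs
  have h0 : g 0 = p := by simp [g, heisMul]
  have h1 : g 1 = heisMul p w := by simp [g]
  have hmem : g '' Icc 0 1 ∩ (u ∩ v) = ∅ :=
    subset_empty_iff.1 ((inter_subset_inter_left _ hsub).trans hdisj.subset)
  have hpu : (g '' Icc 0 1 ∩ u).Nonempty :=
    ⟨p, ⟨0, by simp, h0⟩, hp.1.2⟩
  have hwmem : heisMul p w ∈ g '' Icc 0 1 := ⟨1, by simp, h1⟩
  have hpv : (g '' Icc 0 1 ∩ v).Nonempty := by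
    refine ⟨heisMul p w, hwmem, ?_⟩
    exact (hKuv (hsub hwmem)).resolve_left fun hu' ↦ hp.2 ⟨hsub hwmem, hu'⟩
  have := hpre u v hu hv (hsub.trans hKuv) hpu hpv
  rw [hmem] at this
  exact this.ne_empty rfl

/-- `K` is covered by `o(m^{2n+1})` Korányi balls of radius `1/m`. -/
def HasFewDKBalls (K : Set (EuclideanSpace ℝ (Fin (2 * n + 1)))) : Prop :=
  ∀ ε : ℝ, 0 < ε → ∀ᶠ m : ℕ in Filter.atTop,
    ∃ P : Finset (EuclideanSpace ℝ (Fin (2 * n + 1))),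
      (∀ k ∈ K, ∃ c ∈ P, dK n k c ≤ 1 / m) ∧ P.card ≤ ε * (m : ℝ) ^ (2 * n + 1)

lemma volume_heisExit_of_horizontal {K u v : Set (EuclideanSpace ℝ (Fin (2 * n + 1)))}
    (hK : HasFewDKBalls K)
    (hu : IsOpen u) (hv : IsOpen v) (hKuv : Kᶜ ⊆ u ∪ v) (hdisj : Kᶜ ∩ (u ∩ v) = ∅)
    {w : EuclideanSpace ℝ (Fin (2 * n + 1))} (hw : w (tI n) = 0) :
    volume (heisExit (Kᶜ ∩ u) w) = 0 := by
  set W : ℝ := ‖w‖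
  have hW : ∀ i : Fin (2 * n), |w (Fin.castSucc i)| ≤ W := fun i ↦ PiLp.norm_apply_le w _
  have hW0 : 0 ≤ W := norm_nonneg _
  set D : ℝ := 1 + W + 4 * n * W
  have hD : 0 < D := by positivity
  set M : ℝ := 2 ^ (2 * n + 1) * D ^ (2 * n + 2)
  have hM : 0 < M := by positivity
  refine le_antisymm (ENNReal.le_of_forall_pos_le_add fun η hη _ ↦ ?_) bot_le
  rw [zero_add]
  obtain ⟨m, ⟨P, hP, hcard⟩, hm⟩ :=
    ((hK (η / M) (by positivity)).and (Filter.eventually_ge_atTop 1)).exists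
  have hm0 : (0 : ℝ) < m := by exact_mod_cast hm
  have hsub : heisExit (Kᶜ ∩ u) ((m : ℝ)⁻¹ • w) ⊆
      ⋃ c ∈ P, heisMul c '' heisBox n (D * (1 / m)) := by
    intro p hp
    obtain ⟨s, hs, hsK⟩ := exists_heisMul_smul_mem hu hv hKuv hdisj hp
    obtain ⟨c, hc, hdc⟩ := hP _ hsK
    obtain ⟨b, hb, hcb⟩ := exists_mem_heisBox_of_dK_le (by positivity) hdc
    refine mem_iUnion₂.2 ⟨c, hc, heisMul b ((-(s * (m : ℝ)⁻¹)) • w), ?_, ?_⟩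
    · refine heisMul_smul_mem_heisBox (by positivity) hW0 hb hW hw ?_
      rw [abs_neg, abs_mul, abs_of_nonneg hs.1, abs_of_pos (inv_pos.2 hm0), one_div]
      exact mul_le_of_le_one_left (by positivity) hs.2
    · rw [← heisMul_assoc, hcb, neg_smul, mul_smul, heisMul_heisMul_neg]
  have hvol : volume (heisExit (Kᶜ ∩ u) ((m : ℝ)⁻¹ • w)) ≤
      P.card * ENNReal.ofReal (2 ^ (2 * n + 1) * (D * (1 / m)) ^ (2 * n + 2)) := by
    refine (measure_mono hsub).trans ((measure_biUnion_finset_le _ _).trans ?_)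
    simp only [volume_image_heisMul, volume_heisBox (by positivity : 0 ≤ D * (1 / m)),
      Finset.sum_const, nsmul_eq_mul, le_refl]
  calc volume (heisExit (Kᶜ ∩ u) w)
      = volume (heisExit (Kᶜ ∩ u) ((m : ℝ) • (m : ℝ)⁻¹ • w)) := by
        rw [smul_inv_smul₀ hm0.ne']
    _ ≤ m * (P.card * ENNReal.ofReal (2 ^ (2 * n + 1) * (D * (1 / m)) ^ (2 * n + 2))) :=
        (volume_heisExit_nsmul_le _ _).trans (by gcongr)
    _ = ENNReal.ofReal (m * (P.card * (2 ^ (2 * n + 1) * (D * (1 / m)) ^ (2 * n + 2)))) := by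
        rw [ENNReal.ofReal_mul hm0.le, ENNReal.ofReal_mul (Nat.cast_nonneg _),
          ENNReal.ofReal_natCast, ENNReal.ofReal_natCast]
    _ ≤ ENNReal.ofReal η := by
        refine ENNReal.ofReal_le_ofReal ?_
        have h1 : m * (P.card * (2 ^ (2 * n + 1) * (D * (1 / m)) ^ (2 * n + 2))) =
            P.card * (M / (m : ℝ) ^ (2 * n + 1)) := by
          rw [mul_pow, one_div, inv_pow, pow_succ (m : ℝ) (2 * n + 1)]
          simp only [M]
          field_simp
        rw [h1]
        calc P.card * (M / (m : ℝ) ^ (2 * n + 1))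
            ≤ η / M * (m : ℝ) ^ (2 * n + 1) * (M / (m : ℝ) ^ (2 * n + 1)) := by gcongr
          _ = η := by field_simp
    _ = η := ENNReal.ofReal_coe_nnreal

/-- Every element of `ℍ^n` is a product of horizontal elements. -/
lemma heisMul_induction (hn : 1 ≤ n) {q : EuclideanSpace ℝ (Fin (2 * n + 1)) → Prop}
    (hhor : ∀ w, w (tI n) = 0 → q w) (hmul : ∀ w v, q w → q v → q (heisMul w v))
    (g : EuclideanSpace ℝ (Fin (2 * n + 1))) : q g := by
  set j : Fin n := ⟨0, hn⟩
  set a : EuclideanSpace ℝ (Fin (2 * n + 1)) := EuclideanSpace.single (xI n j) 1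
  set b : EuclideanSpace ℝ (Fin (2 * n + 1)) := EuclideanSpace.single (yI n j) (-g (tI n) / 4)
  have ha : a (tI n) = 0 := by simp [a, (xI_ne_tI j).symm]
  have hb : b (tI n) = 0 := by simp [b, (yI_ne_tI j).symm]
  have hab : heisForm n a b = g (tI n) / 2 := by
    have hxy : ∀ i k : Fin n, xI n i ≠ yI n k := fun i k ↦ by
      simp only [xI, yI, ne_eq, Fin.ext_iff]
      omega
    have hx : ∀ i : Fin n, xI n i = xI n j ↔ i = j := fun i ↦ by
      simp only [xI, Fin.ext_iff]
      omega
    have hy : ∀ i : Fin n, yI n i = yI n j ↔ i = j := fun i ↦ by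
      simp only [yI, Fin.ext_iff]
      omega
    rw [heisForm_apply]
    simp only [a, b, PiLp.single_apply, hxy, (hxy _ _).symm, hx, hy, if_false, zero_mul, zero_sub,
      ite_mul, one_mul]
    rw [Finset.sum_neg_distrib, Finset.sum_ite_eq']
    simp
    ring
  have hg : heisMul (g - g (tI n) • heisCenter n) (heisMul (heisMul a b) (heisMul (-a) (-b))) =
      g := by
    have hba : heisForm n b a = -(g (tI n) / 2) := by rw [heisForm_swap, hab]
    simp only [heisMul, map_add, map_sub, map_neg, map_smul, LinearMap.add_apply,
      LinearMap.sub_apply, LinearMap.neg_apply, LinearMap.smul_apply,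
      heisForm_heisCenter, heisForm_heisCenter_left, heisForm_self, hab, hba, smul_zero, add_zero]
    module
  rw [← hg]
  refine hmul _ _ (hhor _ ?_) (hmul _ _ (hmul _ _ (hhor _ ha) (hhor _ hb))
    (hmul _ _ (hhor _ ?_) (hhor _ ?_)))
  · simp
  · simp [ha]
  · simp [hb]

/-- A closed set covered by few Korányi balls does not separate `ℍ^n`. -/
theorem HasFewDKBalls.isPreconnected_compl (hn : 1 ≤ n)
    {K : Set (EuclideanSpace ℝ (Fin (2 * n + 1)))} (hK : HasFewDKBalls K) (hKc : IsClosed K) :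
    IsPreconnected Kᶜ := by
  intro u v hu hv hKuv ⟨a, haK, hau⟩ ⟨b, hbK, hbv⟩
  rw [nonempty_iff_ne_empty]
  intro hdisj
  have hnull : ∀ g, volume (heisExit (Kᶜ ∩ u) g) = 0 :=
    heisMul_induction hn (fun w hw ↦ volume_heisExit_of_horizontal hK hu hv hKuv hdisj hw)
      fun w v hw hv ↦ le_antisymm
        ((volume_heisExit_heisMul_le w v).trans (by rw [hw, hv, add_zero])) bot_le
  set g := b - a + heisForm n b a • heisCenter n
  have hg : heisMul a g = b := heisMul_sub_add a b
  have hcont : Continuous fun p : EuclideanSpace ℝ (Fin (2 * n + 1)) ↦ heisMul p g :=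
    continuous_heisMul.comp (continuous_id.prodMk continuous_const)
  have hopen : IsOpen ((Kᶜ ∩ u) ∩ (fun p ↦ heisMul p g) ⁻¹' (Kᶜ ∩ v)) :=
    (hKc.isOpen_compl.inter hu).inter ((hKc.isOpen_compl.inter hv).preimage hcont)
  have hpos := hopen.measure_pos volume ⟨a, ⟨haK, hau⟩, by
    rw [mem_preimage, hg]
    exact ⟨hbK, hbv⟩⟩
  refine hpos.ne' (measure_mono_null ?_ (hnull g))
  rintro p ⟨hp, hpK, hpv⟩
  exact ⟨hp, fun h ↦ hdisj.subset ⟨hpK, h.2, hpv⟩⟩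

end Connectivity

/-- For `γ > 2n/(2n+1)` there is no continuous injective map
`f : S^{2n} → ℝ^{2n+1}` which is `γ`-Hölder continuous as a map into `ℍ^n`. -/
theorem stmt2 (n : ℕ) (hn : 1 ≤ n) (γ : ℝ) (hγ : 2*(n:ℝ)/(2*(n:ℝ)+1) < γ) :
    ¬ ∃ f : sphere (0 : EuclideanSpace ℝ (Fin (2*n+1))) 1 → EuclideanSpace ℝ (Fin (2*n+1)),
      Continuous f ∧ Function.Injective f ∧
      ∃ C : ℝ, ∀ x y : sphere (0 : EuclideanSpace ℝ (Fin (2*n+1))) 1,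
        dK n (f x) (f y) ≤ C * dist x y ^ γ := by
  rintro ⟨f, hf, hinj, C, hC⟩
  obtain ⟨F, hF, hsep⟩ := exists_finite_not_isPreconnected_compl hf hinj
  have hcov : HasFewDKBalls (range f ∪ F) := fun ε hε ↦ exists_finset_forall_dK_le hγ hC hF hε
  exact hsep (hcov.isPreconnected_compl hn ((isCompact_range hf).isClosed.union hF.isClosed))
end
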